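/- arXiv:2412.01602 — 2 statements merged into one kernel-verified Lean document; each statement's English description precedes it below -/
import Mathlib

section
/- Let G = G_1 ⊕ G_2 be a 1-sum of graphs G_1 and G_2. Then h*(C_G; z) = h*(C_{G_1}; z) · h*(C_{G_2}; z). -/
open Polynomial Pointwise

/-- The set of vertices (generating points) of the cosmological polytope of the
multigraph with edge-endpoint map `ends : E → Sym2 V`. -/
def cosmoVertices {V E : Type*} [DecidableEq V] [DecidableEq E] (ends : E → Sym2 V) :
    Set ((V ⊕ E) → ℝ) :=
  { x | ∃ (f : E) (i j : V), ends f = s(i, j) ∧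
      (x = Pi.single (Sum.inl i) 1 + Pi.single (Sum.inl j) 1 - Pi.single (Sum.inr f) 1 ∨
       x = Pi.single (Sum.inl i) 1 - Pi.single (Sum.inl j) 1 + Pi.single (Sum.inr f) 1 ∨
       x = -Pi.single (Sum.inl i) 1 + Pi.single (Sum.inl j) 1 + Pi.single (Sum.inr f) 1) }

/-- The cosmological polytope of a multigraph. -/
def cosmoPolytope {V E : Type*} [DecidableEq V] [DecidableEq E] (ends : E → Sym2 V) :
    Set ((V ⊕ E) → ℝ) :=
  convexHull ℝ (cosmoVertices ends)

/-- Number of lattice points of the `t`-th dilate of `P`. -/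
noncomputable def latticePointCount {ι : Type*} (P : Set (ι → ℝ)) (t : ℕ) : ℕ :=
  Set.ncard { x : ι → ℤ | (fun k => (x k : ℝ)) ∈ (t : ℝ) • P }

/-- The Ehrhart series of `P` as a formal power series. -/
noncomputable def ehrhartSeries {ι : Type*} (P : Set (ι → ℝ)) : PowerSeries ℚ :=
  PowerSeries.mk fun t => if t = 0 then 1 else (latticePointCount P t : ℚ)

/-- `h` is the `h^*`-polynomial of the `d`-dimensional lattice polytope `P`:
`Ehr(P; z) = h(z) / (1-z)^(d+1)` as formal power series. -/
def IsHStarPoly {ι : Type*} (P : Set (ι → ℝ)) (d : ℕ) (h : Polynomial ℚ) : Prop :=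
  ehrhartSeries P * (1 - PowerSeries.X) ^ (d + 1) = (h : PowerSeries ℚ)

/-- Adjacency relation of the multigraph given by `ends`. -/
def multigraphAdj {V E : Type*} (ends : E → Sym2 V) (i j : V) : Prop :=
  ∃ f, ends f = s(i, j)

/-- Reachability in the multigraph given by `ends`. -/
def multigraphReach {V E : Type*} (ends : E → Sym2 V) : V → V → Prop :=
  Relation.ReflTransGen (multigraphAdj ends)

/-- The number of connected components of the multigraph given by `ends`. -/
noncomputable def numComponents {V E : Type*} (ends : E → Sym2 V) : ℕ :=
  Nat.card (Quot (multigraphReach ends))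


/-- The endpoint map of the `1`-sum `G₁ ⊕_{v,w} G₂`, realized on a vertex type `W` via
injections `φ₁ : V₁ → W`, `φ₂ : V₂ → W` identifying `v` with `w`; the edges are `E₁ ⊕ E₂`. -/
def oneSumEnds {V₁ E₁ V₂ E₂ W : Type*}
    (ends₁ : E₁ → Sym2 V₁) (ends₂ : E₂ → Sym2 V₂) (φ₁ : V₁ → W) (φ₂ : V₂ → W) :
    (E₁ ⊕ E₂) → Sym2 W :=
  Sum.elim (fun f => (ends₁ f).map φ₁) (fun f => (ends₂ f).map φ₂)

/-!
The lattice points of the cone over a polytope form a graded monoid whose Hilbert series is the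
Ehrhart series. For a `1`-sum this monoid `M` is glued from the monoids `M₁`, `M₂` of the two
summands along `e_v = e_w`: every element of `M` is in exactly one way the sum of an element of `M₁`
and an element `b` of `M₂` for which `b - e_w ∉ M₂`. Hence the Ehrhart series of `G` is the product
of those of `G₁` and `G₂` times `1 - z`, and since `|V| + |E| = (|V₁| + |E₁|) + (|V₂| + |E₂|) - 1`,
the factor `1 - z` is exactly what makes `h*` multiplicative.

That `M` is generated by `M₁` and `M₂` says that a lattice point which is a sum of two real cone
points is also a sum of two integral ones. The two real points differ from integral ones only in the
coordinate of the common vertex, and they can be corrected because lowering that coordinate to its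
floor does not leave the cone. Indeed the cone is cut out by one inequality per subgraph, in which
the coordinate is multiplied by `0` or `1`. Rounding it down therefore leaves each left-hand side
greater than `-1`, hence nonnegative as it is now an integer. For integral points, the sufficiency
of the subgraph inequalities is Hall's marriage theorem: they allow every edge to charge twice its
weight to its endpoints.
-/

section HilbertSeries

variable {α β γ : Type*}

/-- The Hilbert series `∑ₙ #{a ∈ S | deg a = n} Xⁿ` of a set `S` graded by `deg`. The degree takes
values in `ℤ` so that it can be additive on a group containing `S`; infinite fibres count as `0`
and elements of negative degree are ignored. -/
noncomputable def hilbertSeries (S : Set α) (deg : α → ℤ) : PowerSeries ℚ :=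
  PowerSeries.mk fun n => ({a ∈ S | deg a = n}.ncard : ℚ)

/-- The grading `deg` of `S` is nonnegative with finite fibres, so that `hilbertSeries S deg`
counts every element of `S`. -/
structure IsFinitelyGraded (S : Set α) (deg : α → ℤ) : Prop where
  nonneg : ∀ a ∈ S, 0 ≤ deg a
  finite : ∀ n : ℕ, {a ∈ S | deg a = n}.Finite

theorem IsFinitelyGraded.mono {S T : Set α} {deg : α → ℤ} (hT : IsFinitelyGraded T deg)
    (hST : S ⊆ T) : IsFinitelyGraded S deg where
  nonneg a ha := hT.nonneg a (hST ha)
  finite n := (hT.finite n).subset fun _ ha => ⟨hST ha.1, ha.2⟩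

theorem hilbertSeries_eq_of_bijOn {S : Set α} {T : Set β} {deg : α → ℤ} {deg' : β → ℤ}
    {f : α → β} (hf : Set.BijOn f S T) (hdeg : ∀ a ∈ S, deg' (f a) = deg a) :
    hilbertSeries S deg = hilbertSeries T deg' := by
  ext n
  simp only [hilbertSeries, PowerSeries.coeff_mk, Nat.cast_inj]
  refine Set.BijOn.ncard_eq (f := f) ⟨fun a ha => ⟨hf.mapsTo ha.1, (hdeg a ha.1).trans ha.2⟩,
    hf.injOn.mono fun a ha => ha.1, fun b hb => ?_⟩
  obtain ⟨a, ha, rfl⟩ := hf.surjOn hb.1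
  exact ⟨a, ⟨ha, (hdeg a ha).symm.trans hb.2⟩, rfl⟩

theorem hilbertSeries_union {S T : Set α} {deg : α → ℤ} (hST : Disjoint S T)
    (hS : IsFinitelyGraded S deg) (hT : IsFinitelyGraded T deg) :
    hilbertSeries (S ∪ T) deg = hilbertSeries S deg + hilbertSeries T deg := by
  ext n
  simp only [hilbertSeries, PowerSeries.coeff_mk, map_add]
  rw [← Nat.cast_add, ← Set.ncard_union_eq (hST.mono (Set.sep_subset _ _) (Set.sep_subset _ _))
    (hS.finite n) (hT.finite n), ← Set.sep_union]
  rfl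

theorem hilbertSeries_add_one {S : Set α} {deg : α → ℤ} (hS : ∀ a ∈ S, 0 ≤ deg a) :
    hilbertSeries S (fun a => deg a + 1) = hilbertSeries S deg * PowerSeries.X := by
  ext n
  cases n with
  | zero =>
    have hempty : {a ∈ S | deg a + 1 = (0 : ℕ)} = ∅ :=
      Set.eq_empty_of_forall_notMem fun a ⟨ha, hdeg⟩ => by have := hS a ha; omega
    rw [hilbertSeries, PowerSeries.coeff_mk, hempty, Set.ncard_empty, Nat.cast_zero,
      PowerSeries.coeff_zero_mul_X]
  | succ n => simp [hilbertSeries, PowerSeries.coeff_succ_mul_X]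

theorem hilbertSeries_prod {S : Set α} {T : Set β} {deg : α → ℤ} {deg' : β → ℤ}
    (hS : IsFinitelyGraded S deg) (hT : IsFinitelyGraded T deg') :
    hilbertSeries (S ×ˢ T) (fun p => deg p.1 + deg' p.2) =
      hilbertSeries S deg * hilbertSeries T deg' := by
  classical
  ext n
  have hfib : {p ∈ S ×ˢ T | deg p.1 + deg' p.2 = n} =
      ((Finset.HasAntidiagonal.antidiagonal n).biUnion fun k =>
        (hS.finite k.1).toFinset ×ˢ (hT.finite k.2).toFinset : Finset (α × β)) := by
    ext ⟨a, b⟩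
    simp only [Set.mem_ofPred_eq, Set.mem_prod, Finset.coe_biUnion, Finset.mem_coe,
      Finset.HasAntidiagonal.mem_antidiagonal, Finset.coe_product, Set.Finite.coe_toFinset,
      Set.mem_iUnion, exists_prop, Prod.exists]
    constructor
    · rintro ⟨⟨ha, hb⟩, hdeg⟩
      have := hS.nonneg a ha
      have := hT.nonneg b hb
      exact ⟨(deg a).toNat, (deg' b).toNat, by omega, ⟨ha, by omega⟩, hb, by omega⟩
    · rintro ⟨k, l, rfl, ⟨ha, hk⟩, hb, hl⟩
      exact ⟨⟨ha, hb⟩, by rw [hk, hl, Nat.cast_add]⟩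
  simp only [hilbertSeries, PowerSeries.coeff_mk, PowerSeries.coeff_mul]
  rw [hfib, Set.ncard_coe_finset, Finset.card_biUnion]
  · simp [Set.ncard_eq_toFinset_card _ (hS.finite _), Set.ncard_eq_toFinset_card _ (hT.finite _)]
  · intro k _ l _ hkl
    refine Finset.disjoint_left.2 fun p hpk hpl => hkl (Prod.ext ?_ ?_) <;>
      simp only [Finset.mem_product, Set.Finite.mem_toFinset, Set.mem_ofPred_eq] at hpk hpl <;>
      omega

end HilbertSeries

section Gluing

variable {A A₁ A₂ : Type*} [AddCommGroup A] [AddCommGroup A₁] [AddCommGroup A₂]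

/-- The elements of the monoid `M` that cannot be written as `e + a` with `a ∈ M`. -/
def primitivePart (M : AddSubmonoid A) (e : A) : Set A :=
  {a | a ∈ M ∧ a - e ∉ M}

theorem primitivePart_subset (M : AddSubmonoid A) (e : A) : primitivePart M e ⊆ M :=
  fun _ ha => ha.1

theorem hilbertSeries_primitivePart {M : AddSubmonoid A} {e : A} {deg : A →+ ℤ}
    (hM : IsFinitelyGraded (M : Set A) deg) (he : e ∈ M) (hdeg : deg e = 1) :
    hilbertSeries (primitivePart M e) deg =
      hilbertSeries (M : Set A) deg * (1 - PowerSeries.X) := by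
  have htranslate : ∀ a, a ∈ (· + e) '' (M : Set A) ↔ a - e ∈ M := by
    simp [← sub_eq_add_neg]
  have hsub : (· + e) '' (M : Set A) ⊆ M := by
    rintro _ ⟨a, ha, rfl⟩
    exact add_mem ha he
  have hunion : primitivePart M e ∪ (· + e) '' (M : Set A) = M := by
    ext a
    rw [Set.mem_union, htranslate]
    by_cases ha : a - e ∈ M
    · simpa [primitivePart, ha] using add_mem ha he
    · simp [primitivePart, ha]
  have hshift : hilbertSeries ((· + e) '' (M : Set A)) deg =
      hilbertSeries (M : Set A) deg * PowerSeries.X := by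
    rw [← hilbertSeries_add_one hM.nonneg]
    exact (hilbertSeries_eq_of_bijOn (add_left_injective e).injOn.bijOn_image
      fun a _ => by rw [map_add, hdeg]).symm
  have hdisjoint : Disjoint (primitivePart M e) ((· + e) '' (M : Set A)) :=
    Set.disjoint_left.2 fun a ha ha' => ha.2 ((htranslate a).1 ha')
  have hadd := hilbertSeries_union hdisjoint (hM.mono (primitivePart_subset M e)) (hM.mono hsub)
  rw [hunion, hshift] at hadd
  linear_combination -hadd

theorem exists_sub_nsmul_mem_primitivePart {M : AddSubmonoid A} {e : A} {deg : A →+ ℤ}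
    (hM : ∀ a ∈ M, 0 ≤ deg a) (hdeg : 0 < deg e) {a : A} (ha : a ∈ M) :
    ∃ n : ℕ, a - n • e ∈ primitivePart M e := by
  classical
  have hex : ∃ n : ℕ, a - n • e ∉ M := by
    refine ⟨(deg a).toNat + 1, fun hmem => ?_⟩
    have hdeg_sub := hM _ hmem
    rw [map_sub, map_nsmul, nsmul_eq_mul, Nat.cast_add, Int.toNat_of_nonneg (hM a ha),
      Nat.cast_one] at hdeg_sub
    nlinarith [hM a ha]
  obtain ⟨n, hn⟩ : ∃ n, Nat.find hex = n + 1 :=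
    Nat.exists_eq_succ_of_ne_zero fun h0 => Nat.find_spec hex (by simpa [h0] using ha)
  refine ⟨n, not_not.1 (Nat.find_min hex (by omega)), ?_⟩
  have := Nat.find_spec hex
  rwa [hn, succ_nsmul, ← sub_sub] at this

theorem eq_zero_of_add_zsmul_mem_primitivePart {M : AddSubmonoid A} {e a : A} (he : e ∈ M)
    {n : ℤ} (ha : a ∈ primitivePart M e) (hna : a + n • e ∈ primitivePart M e) : n = 0 := by
  have not_pos : ∀ {b : A} {k : ℤ}, b ∈ M → 0 < k → b + k • e ∉ primitivePart M e := by
    intro b k hb hk hbk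
    obtain ⟨l, rfl⟩ : ∃ l : ℕ, k = l + 1 := ⟨(k - 1).toNat, by omega⟩
    refine hbk.2 ?_
    rw [add_zsmul, one_zsmul, natCast_zsmul, ← add_assoc, add_sub_cancel_right]
    exact add_mem hb (nsmul_mem he l)
  rcases lt_trichotomy n 0 with hn | hn | hn
  · exact (not_pos hna.1 (neg_pos.2 hn) (by simpa using ha)).elim
  · exact hn
  · exact (not_pos ha.1 hn hna).elim

variable {M₁ : AddSubmonoid A₁} {M₂ : AddSubmonoid A₂} {ψ₁ : A₁ →+ A} {ψ₂ : A₂ →+ A}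
  {e₁ : A₁} {e₂ : A₂}

theorem bijOn_map_sup_map {deg₂ : A₂ →+ ℤ} (he₁ : e₁ ∈ M₁) (he₂ : e₂ ∈ M₂)
    (hM₂ : ∀ b ∈ M₂, 0 ≤ deg₂ b) (hdeg₂ : 0 < deg₂ e₂) (hψ : ψ₁ e₁ = ψ₂ e₂)
    (hker : ∀ a b, ψ₁ a + ψ₂ b = 0 → ∃ n : ℤ, a = n • e₁ ∧ b = -(n • e₂)) :
    Set.BijOn (fun p : A₁ × A₂ => ψ₁ p.1 + ψ₂ p.2) ((M₁ : Set A₁) ×ˢ primitivePart M₂ e₂)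
      ((M₁.map ψ₁ ⊔ M₂.map ψ₂ : AddSubmonoid A) : Set A) := by
  refine ⟨fun p hp => ?_, ?_, ?_⟩
  · exact AddSubmonoid.add_mem_sup ⟨p.1, hp.1, rfl⟩ ⟨p.2, hp.2.1, rfl⟩
  · rintro ⟨a, b⟩ ⟨-, hb⟩ ⟨a', b'⟩ ⟨-, hb'⟩ heq
    obtain ⟨n, hna, hnb⟩ := hker (a - a') (b - b') <| by
      rw [map_sub, map_sub, sub_add_sub_comm, sub_eq_zero]
      exact heq
    have hb'_eq : b' = b + n • e₂ := by
      rw [← sub_eq_iff_eq_add', ← neg_sub, hnb, neg_neg]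
    obtain rfl := eq_zero_of_add_zsmul_mem_primitivePart he₂ hb (hb'_eq ▸ hb')
    rw [zero_zsmul, sub_eq_zero] at hna
    rw [zero_zsmul, add_zero] at hb'_eq
    rw [hna, hb'_eq]
  · intro x hx
    obtain ⟨_, ⟨a, ha, rfl⟩, _, ⟨b, hb, rfl⟩, rfl⟩ := AddSubmonoid.mem_sup.1 hx
    obtain ⟨n, hn⟩ := exists_sub_nsmul_mem_primitivePart hM₂ hdeg₂ hb
    refine ⟨(a + n • e₁, b - n • e₂), ⟨add_mem ha (nsmul_mem he₁ n), hn⟩, ?_⟩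
    simp only [map_add, map_sub, map_nsmul, hψ]
    abel

theorem hilbertSeries_map_sup_map {deg : A →+ ℤ} {deg₁ : A₁ →+ ℤ} {deg₂ : A₂ →+ ℤ}
    (hM₁ : IsFinitelyGraded (M₁ : Set A₁) deg₁) (hM₂ : IsFinitelyGraded (M₂ : Set A₂) deg₂)
    (he₁ : e₁ ∈ M₁) (he₂ : e₂ ∈ M₂) (hdeg₂ : deg₂ e₂ = 1) (hψ : ψ₁ e₁ = ψ₂ e₂)
    (hker : ∀ a b, ψ₁ a + ψ₂ b = 0 → ∃ n : ℤ, a = n • e₁ ∧ b = -(n • e₂))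
    (hψ₁ : ∀ a, deg (ψ₁ a) = deg₁ a) (hψ₂ : ∀ b, deg (ψ₂ b) = deg₂ b) :
    hilbertSeries ((M₁.map ψ₁ ⊔ M₂.map ψ₂ : AddSubmonoid A) : Set A) deg =
      hilbertSeries (M₁ : Set A₁) deg₁ *
        (hilbertSeries (M₂ : Set A₂) deg₂ * (1 - PowerSeries.X)) := by
  rw [← hilbertSeries_primitivePart hM₂ he₂ hdeg₂,
    ← hilbertSeries_prod hM₁ (hM₂.mono (primitivePart_subset M₂ e₂))]
  refine (hilbertSeries_eq_of_bijOn (bijOn_map_sup_map he₁ he₂ hM₂.nonneg ?_ hψ hker)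
    fun p _ => ?_).symm
  · exact hdeg₂ ▸ one_pos
  · rw [map_add, hψ₁, hψ₂]

end Gluing

section PolyhedralCone

theorem nonneg_of_mem_hull {E : Type*} [AddCommGroup E] [Module ℝ E] {X : Set E} {ℓ : E →ₗ[ℝ] ℝ}
    (hℓ : ∀ x ∈ X, 0 ≤ ℓ x) {x : E} (hx : x ∈ PointedCone.hull ℝ X) : 0 ≤ ℓ x := by
  have hle : PointedCone.hull ℝ X ≤ (PointedCone.positive ℝ ℝ).comap ℓ := Submodule.span_le.2 hℓ
  exact hle hx

theorem mem_smul_convexHull_iff {E : Type*} [AddCommGroup E] [Module ℝ E] {X : Set E}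
    {ℓ : E →ₗ[ℝ] ℝ} (hℓ : ∀ x ∈ X, ℓ x = 1) {t : ℝ} (ht : 0 < t) {x : E} :
    x ∈ t • convexHull ℝ X ↔ x ∈ PointedCone.hull ℝ X ∧ ℓ x = t := by
  constructor
  · rintro ⟨y, hy, rfl⟩
    have hy_hull : y ∈ PointedCone.hull ℝ X :=
      convexHull_min PointedCone.subset_hull (PointedCone.hull ℝ X).toConvexCone.convex hy
    have hℓy : ℓ y = 1 := convexHull_min hℓ (convex_hyperplane ℓ.isLinear 1) hy
    exact ⟨PointedCone.smul_mem _ ht.le hy_hull, by simp [hℓy]⟩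
  · rintro ⟨hx, hℓx⟩
    obtain ⟨c, hcX, hc, rfl⟩ := PointedCone.mem_hull_set.1 hx
    have hsum : ∑ y ∈ c.support, c y = t := by
      rw [← hℓx, Finsupp.sum, map_sum]
      exact Finset.sum_congr rfl fun y hy => by simp [hℓ y (hcX hy)]
    refine ⟨c.support.centerMass c id,
      Finset.centerMass_mem_convexHull _ (fun y _ => hc y) (hsum ▸ ht) hcX, ?_⟩
    simp [Finset.centerMass, hsum, Finsupp.sum, smul_smul, ht.ne']

variable {ι : Type*}

/-- The monoid of lattice points of a cone in `ℝ^ι`. -/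
def latticePoints (C : PointedCone ℝ (ι → ℝ)) : AddSubmonoid (ι → ℤ) :=
  C.toAddSubmonoid.comap ((Int.castAddHom ℝ).compLeft ι)

theorem mem_latticePoints {C : PointedCone ℝ (ι → ℝ)} {z : ι → ℤ} :
    z ∈ latticePoints C ↔ (fun i => (z i : ℝ)) ∈ C :=
  Iff.rfl

theorem single_one_mem_latticePoints [DecidableEq ι] {C : PointedCone ℝ (ι → ℝ)} {k : ι}
    (hk : Pi.single k 1 ∈ C) : Pi.single k 1 ∈ latticePoints C := by
  rw [mem_latticePoints]
  convert hk with i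
  simp [Pi.single_apply]

variable [Fintype ι]

/-- The sum of the coordinates of a vector. It equals `1` on the generators of the cones below,
so its level sets cut out the dilates of the polytopes they span. -/
def coordSum (R ι : Type*) [CommSemiring R] [Fintype ι] : (ι → R) →ₗ[R] R :=
  ∑ i, LinearMap.proj i

theorem coordSum_apply {R : Type*} [CommSemiring R] (x : ι → R) : coordSum R ι x = ∑ i, x i := by
  simp [coordSum]

theorem intCast_coordSum (z : ι → ℤ) :
    (coordSum ℤ ι z : ℝ) = coordSum ℝ ι fun i => (z i : ℝ) := by
  simp [coordSum_apply]

theorem exists_abs_apply_le_mul_coordSum {X : Set (ι → ℝ)} (hX : X.Finite)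
    (hsum : ∀ x ∈ X, coordSum ℝ ι x = 1) :
    ∃ M : ℕ, ∀ z ∈ latticePoints (PointedCone.hull ℝ X), ∀ k, |z k| ≤ M * coordSum ℤ ι z := by
  obtain ⟨r, hr⟩ := hX.isBounded.exists_norm_le
  obtain ⟨M, hM⟩ := exists_nat_ge r
  refine ⟨M, fun z hz k => ?_⟩
  have signed_le : ∀ σ : ℤ, |(σ : ℝ)| = 1 → σ * z k ≤ M * coordSum ℤ ι z := by
    intro σ hσ
    have hnonneg := nonneg_of_mem_hull (ℓ := (M : ℝ) • coordSum ℝ ι - (σ : ℝ) • LinearMap.proj k)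
      (fun y hy => ?_) (mem_latticePoints.1 hz)
    · simp only [LinearMap.sub_apply, LinearMap.smul_apply, LinearMap.proj_apply, smul_eq_mul,
        ← intCast_coordSum, sub_nonneg] at hnonneg
      exact_mod_cast hnonneg
    · simp only [LinearMap.sub_apply, LinearMap.smul_apply, LinearMap.proj_apply, smul_eq_mul,
        hsum y hy, mul_one, sub_nonneg]
      calc (σ : ℝ) * y k ≤ |σ * y k| := le_abs_self _
        _ = ‖y k‖ := by rw [abs_mul, hσ, one_mul, Real.norm_eq_abs]
        _ ≤ M := (norm_le_pi_norm y k).trans ((hr y hy).trans hM)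
  exact abs_le'.2 ⟨by simpa using signed_le 1 (by simp), by simpa using signed_le (-1) (by simp)⟩

theorem isFinitelyGraded_latticePoints {X : Set (ι → ℝ)} (hX : X.Finite)
    (hsum : ∀ x ∈ X, coordSum ℝ ι x = 1) :
    IsFinitelyGraded (latticePoints (PointedCone.hull ℝ X) : Set (ι → ℤ)) (coordSum ℤ ι) where
  nonneg z hz := by
    rw [← Int.cast_nonneg_iff (R := ℝ), intCast_coordSum]
    exact nonneg_of_mem_hull (fun x hx => (hsum x hx).symm ▸ zero_le_one) hz
  finite n := by
    classical
    obtain ⟨M, hM⟩ := exists_abs_apply_le_mul_coordSum hX hsum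
    refine (Set.finite_Icc (fun _ : ι => -(M * n : ℤ)) fun _ => (M * n : ℤ)).subset ?_
    rintro z ⟨hz, hn⟩
    have habs : ∀ k, |z k| ≤ (M * n : ℤ) := hn ▸ hM z hz
    exact ⟨fun k => (abs_le.1 (habs k)).1, fun k => (abs_le.1 (habs k)).2⟩

theorem ehrhartSeries_convexHull {X : Set (ι → ℝ)} (hX : X.Finite)
    (hsum : ∀ x ∈ X, coordSum ℝ ι x = 1) :
    ehrhartSeries (convexHull ℝ X) =
      hilbertSeries (latticePoints (PointedCone.hull ℝ X) : Set (ι → ℤ)) (coordSum ℤ ι) := by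
  ext t
  simp only [ehrhartSeries, hilbertSeries, PowerSeries.coeff_mk]
  split_ifs with ht
  · subst ht
    obtain ⟨M, hM⟩ := exists_abs_apply_le_mul_coordSum hX hsum
    have hzero : {z ∈ (latticePoints (PointedCone.hull ℝ X) : Set (ι → ℤ)) |
        coordSum ℤ ι z = (0 : ℕ)} = {0} := by
      refine Set.eq_singleton_iff_unique_mem.2 ⟨⟨zero_mem _, map_zero _⟩, ?_⟩
      rintro z ⟨hz, hdeg⟩
      funext k
      have hk := hM z hz k
      rw [hdeg, Nat.cast_zero, mul_zero] at hk
      exact abs_nonpos_iff.1 hk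
    rw [hzero, Set.ncard_singleton, Nat.cast_one]
  · rw [latticePointCount]
    congr 2
    ext z
    have htpos : (0 : ℝ) < t := by positivity
    rw [Set.mem_ofPred_eq, mem_smul_convexHull_iff hsum htpos, ← intCast_coordSum, Set.mem_sep_iff]
    exact and_congr Iff.rfl (by norm_cast)

end PolyhedralCone

section OnePointGluing

open Function (extend ExtendByZero.linearMap ExtendByZero.hom)

variable {I J I₁ I₂ : Type*}

/-- The maps `ψ₁` and `ψ₂` embed `I₁` and `I₂` into `J` with images meeting in the single point
`ψ₁ k₁ = ψ₂ k₂`. The images need not cover `J`. -/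
structure IsOnePointGluing (ψ₁ : I₁ → J) (ψ₂ : I₂ → J) (k₁ : I₁) (k₂ : I₂) : Prop where
  injective_left : Function.Injective ψ₁
  injective_right : Function.Injective ψ₂
  apply_eq : ψ₁ k₁ = ψ₂ k₂
  eq_of_apply_eq : ∀ ⦃i j⦄, ψ₁ i = ψ₂ j → i = k₁ ∧ j = k₂

theorem extend_single_zero {R : Type*} [Zero R] [DecidableEq I] [DecidableEq J] {ψ : I → J}
    (hψ : Function.Injective ψ) (k : I) (r : R) :
    extend ψ (Pi.single k r) 0 = Pi.single (ψ k) r := by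
  ext j
  by_cases hj : ∃ i, ψ i = j
  · obtain ⟨i, rfl⟩ := hj
    simp [hψ.extend_apply, Pi.single_apply, hψ.eq_iff]
  · rw [Function.extend_apply' _ _ _ hj, Pi.single_eq_of_ne fun h => hj ⟨k, h.symm⟩, Pi.zero_apply]

theorem intCast_extend_zero (ψ : I → J) (z : I → ℤ) :
    (fun j => ((extend ψ z 0 j : ℤ) : ℝ)) = extend ψ (fun i => (z i : ℝ)) 0 := by
  ext j
  rw [Function.apply_extend (Int.cast : ℤ → ℝ)]
  congr 1
  ext
  simp

theorem coordSum_extend_zero {R : Type*} [CommSemiring R] [Fintype I] [Fintype J] {ψ : I → J}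
    (hψ : Function.Injective ψ) (x : I → R) : coordSum R J (extend ψ x 0) = coordSum R I x := by
  rw [coordSum_apply, coordSum_apply]
  refine (Fintype.sum_of_injective ψ hψ x (extend ψ x 0) (fun j hj => ?_) fun i => ?_).symm
  · rw [Function.extend_apply' _ _ _ hj, Pi.zero_apply]
  · rw [hψ.extend_apply]

namespace IsOnePointGluing

variable {ψ₁ : I₁ → J} {ψ₂ : I₂ → J} {k₁ : I₁} {k₂ : I₂}

theorem symm (hψ : IsOnePointGluing ψ₁ ψ₂ k₁ k₂) : IsOnePointGluing ψ₂ ψ₁ k₂ k₁ where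
  injective_left := hψ.injective_right
  injective_right := hψ.injective_left
  apply_eq := hψ.apply_eq.symm
  eq_of_apply_eq _ _ h := (hψ.eq_of_apply_eq h.symm).symm

theorem extend_add_extend_apply_left (hψ : IsOnePointGluing ψ₁ ψ₂ k₁ k₂) {R : Type*}
    [AddZeroClass R] [DecidableEq I₁] (a : I₁ → R) (b : I₂ → R) (i : I₁) :
    extend ψ₁ a 0 (ψ₁ i) + extend ψ₂ b 0 (ψ₁ i) = a i + (Pi.single k₁ (b k₂) : I₁ → R) i := by
  rw [hψ.injective_left.extend_apply]
  rcases eq_or_ne i k₁ with rfl | hi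
  · rw [hψ.apply_eq, hψ.injective_right.extend_apply, Pi.single_eq_same]
  · have hnot : ¬∃ j, ψ₂ j = ψ₁ i := fun ⟨_, hj⟩ => hi (hψ.eq_of_apply_eq hj.symm).1
    rw [Function.extend_apply' _ _ _ hnot, Pi.single_eq_of_ne hi, Pi.zero_apply]

theorem extend_add_extend_apply_right (hψ : IsOnePointGluing ψ₁ ψ₂ k₁ k₂) {R : Type*}
    [AddCommMonoid R] [DecidableEq I₂] (a : I₁ → R) (b : I₂ → R) (j : I₂) :
    extend ψ₁ a 0 (ψ₂ j) + extend ψ₂ b 0 (ψ₂ j) = b j + (Pi.single k₂ (a k₁) : I₂ → R) j := by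
  rw [add_comm, hψ.symm.extend_add_extend_apply_left]

theorem exists_zsmul_of_extend_add_extend_eq_zero (hψ : IsOnePointGluing ψ₁ ψ₂ k₁ k₂)
    [DecidableEq I₁] [DecidableEq I₂] {a : I₁ → ℤ} {b : I₂ → ℤ}
    (hab : extend ψ₁ a 0 + extend ψ₂ b 0 = 0) :
    ∃ n : ℤ, a = n • Pi.single k₁ 1 ∧ b = -(n • Pi.single k₂ 1) := by
  have hleft : ∀ i, a i + (Pi.single k₁ (b k₂) : I₁ → ℤ) i = 0 := fun i => by
    rw [← hψ.extend_add_extend_apply_left a b, ← Pi.add_apply, hab, Pi.zero_apply]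
  have hright : ∀ j, b j + (Pi.single k₂ (a k₁) : I₂ → ℤ) j = 0 := fun j => by
    rw [← hψ.extend_add_extend_apply_right a b, ← Pi.add_apply, hab, Pi.zero_apply]
  have hk : a k₁ = -b k₂ := eq_neg_of_add_eq_zero_left (by simpa using hleft k₁)
  refine ⟨a k₁, funext fun i => ?_, funext fun j => ?_⟩
  · rw [eq_neg_of_add_eq_zero_left (hleft i), hk, Pi.smul_apply, ← Pi.neg_apply, ← Pi.single_neg,
      ← Pi.smul_apply, ← Pi.single_smul, smul_eq_mul, mul_one]
  · rw [eq_neg_of_add_eq_zero_left (hright j), Pi.neg_apply, ← Pi.single_smul, smul_eq_mul, mul_one]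

end IsOnePointGluing

/-- Lowering the `k`-th coordinate to its floor, the other ones being integers, does not leave the
cone `C`. -/
def RoundsDownAt (C : PointedCone ℝ (I → ℝ)) (k : I) : Prop :=
  ∀ x ∈ C, (∀ i ≠ k, ∃ n : ℤ, x i = n) → (fun i => (⌊x i⌋ : ℝ)) ∈ C

variable [DecidableEq I₁] {ψ₁ : I₁ → J} {ψ₂ : I₂ → J} {k₁ : I₁} {k₂ : I₂}
  {C₁ : PointedCone ℝ (I₁ → ℝ)} {C₂ : PointedCone ℝ (I₂ → ℝ)}

-- The fractional part of `b k₂` is moved from `b` to `a`.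
theorem exists_latticePoints_extend_add_extend_eq (hψ : IsOnePointGluing ψ₁ ψ₂ k₁ k₂)
    (hC₁ : Pi.single k₁ 1 ∈ C₁) (hC₂ : RoundsDownAt C₂ k₂) {x : J → ℤ}
    {a : I₁ → ℝ} {b : I₂ → ℝ} (ha : a ∈ C₁) (hb : b ∈ C₂)
    (hab : ∀ j, extend ψ₁ a 0 j + extend ψ₂ b 0 j = x j) :
    ∃ z₁ ∈ latticePoints C₁, ∃ z₂ ∈ latticePoints C₂, extend ψ₁ z₁ 0 + extend ψ₂ z₂ 0 = x := by
  classical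
  have hx_left : ∀ i, (x (ψ₁ i) : ℝ) = a i + (Pi.single k₁ (b k₂) : I₁ → ℝ) i := fun i => by
    rw [← hab, hψ.extend_add_extend_apply_left]
  have hx_right : ∀ j ≠ k₂, (x (ψ₂ j) : ℝ) = b j := fun j hj => by
    rw [← hab, hψ.extend_add_extend_apply_right, Pi.single_eq_of_ne hj, add_zero]
  refine ⟨fun i => x (ψ₁ i) - (Pi.single k₁ ⌊b k₂⌋ : I₁ → ℤ) i, ?_, fun j => ⌊b j⌋,
    hC₂ b hb fun j hj => ⟨x (ψ₂ j), (hx_right j hj).symm⟩, funext fun j => ?_⟩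
  · have hmem := add_mem ha (C₁.smul_mem (Int.fract_nonneg (b k₂)) hC₁)
    rw [mem_latticePoints]
    convert hmem with i
    rw [Int.cast_sub, hx_left]
    rcases eq_or_ne i k₁ with rfl | hi
    · simp [← Int.self_sub_floor, add_sub_assoc]
    · simp [hi]
  · by_cases hj₁ : ∃ i, ψ₁ i = j
    · obtain ⟨i, rfl⟩ := hj₁
      rw [Pi.add_apply, hψ.extend_add_extend_apply_left, sub_add_cancel]
    by_cases hj₂ : ∃ j', ψ₂ j' = j
    · obtain ⟨j', rfl⟩ := hj₂
      have hj' : j' ≠ k₂ := fun h => hj₁ ⟨k₁, h ▸ hψ.apply_eq⟩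
      rw [Pi.add_apply, hψ.extend_add_extend_apply_right, Pi.single_eq_of_ne hj', add_zero,
        ← hx_right j' hj', Int.floor_intCast]
    · have hj := hab j
      rw [Function.extend_apply' _ _ _ hj₁, Function.extend_apply' _ _ _ hj₂] at hj
      rw [Pi.add_apply, Function.extend_apply' _ _ _ hj₁, Function.extend_apply' _ _ _ hj₂]
      simpa [eq_comm] using hj

theorem extend_mem_latticePoints_map {ψ : I → J} {C : PointedCone ℝ (I → ℝ)} {z : I → ℤ}
    (hz : z ∈ latticePoints C) :
    extend ψ z 0 ∈ latticePoints (C.map (ExtendByZero.linearMap ℝ ψ)) := by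
  rw [mem_latticePoints, intCast_extend_zero]
  exact ⟨_, hz, rfl⟩

theorem latticePoints_map_sup_map (hψ : IsOnePointGluing ψ₁ ψ₂ k₁ k₂)
    (hC₁ : Pi.single k₁ 1 ∈ C₁) (hC₂ : RoundsDownAt C₂ k₂) :
    latticePoints (C₁.map (ExtendByZero.linearMap ℝ ψ₁) ⊔ C₂.map (ExtendByZero.linearMap ℝ ψ₂)) =
      (latticePoints C₁).map (ExtendByZero.hom ℤ ψ₁) ⊔
        (latticePoints C₂).map (ExtendByZero.hom ℤ ψ₂) := by
  refine le_antisymm (fun x hx => ?_) (sup_le ?_ ?_)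
  · obtain ⟨_, ⟨a, ha, rfl⟩, _, ⟨b, hb, rfl⟩, hab⟩ := Submodule.mem_sup.1 hx
    obtain ⟨z₁, hz₁, z₂, hz₂, rfl⟩ :=
      exists_latticePoints_extend_add_extend_eq hψ hC₁ hC₂ ha hb (congrFun hab)
    exact AddSubmonoid.add_mem_sup ⟨z₁, hz₁, rfl⟩ ⟨z₂, hz₂, rfl⟩
  · rintro _ ⟨z, hz, rfl⟩
    exact Submodule.mem_sup_left (extend_mem_latticePoints_map hz)
  · rintro _ ⟨z, hz, rfl⟩
    exact Submodule.mem_sup_right (extend_mem_latticePoints_map hz)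

theorem ehrhartSeries_convexHull_union [Fintype I₁] [Fintype I₂] [Finite J] [DecidableEq I₂]
    (hψ : IsOnePointGluing ψ₁ ψ₂ k₁ k₂) {X₁ : Set (I₁ → ℝ)} {X₂ : Set (I₂ → ℝ)}
    (hX₁ : X₁.Finite) (hX₂ : X₂.Finite)
    (hsum₁ : ∀ x ∈ X₁, coordSum ℝ I₁ x = 1) (hsum₂ : ∀ x ∈ X₂, coordSum ℝ I₂ x = 1)
    (hk₁ : Pi.single k₁ 1 ∈ PointedCone.hull ℝ X₁) (hk₂ : Pi.single k₂ 1 ∈ PointedCone.hull ℝ X₂)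
    (hround : RoundsDownAt (PointedCone.hull ℝ X₂) k₂) :
    ehrhartSeries (convexHull ℝ (ExtendByZero.linearMap ℝ ψ₁ '' X₁ ∪
        ExtendByZero.linearMap ℝ ψ₂ '' X₂)) =
      ehrhartSeries (convexHull ℝ X₁) *
        (ehrhartSeries (convexHull ℝ X₂) * (1 - PowerSeries.X)) := by
  cases nonempty_fintype J
  have hsum : ∀ x ∈ ExtendByZero.linearMap ℝ ψ₁ '' X₁ ∪ ExtendByZero.linearMap ℝ ψ₂ '' X₂,
      coordSum ℝ J x = 1 := by
    rintro _ (⟨x, hx, rfl⟩ | ⟨x, hx, rfl⟩)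
    · exact (coordSum_extend_zero hψ.injective_left x).trans (hsum₁ x hx)
    · exact (coordSum_extend_zero hψ.injective_right x).trans (hsum₂ x hx)
  have hhull : PointedCone.hull ℝ (ExtendByZero.linearMap ℝ ψ₁ '' X₁ ∪
        ExtendByZero.linearMap ℝ ψ₂ '' X₂) =
      (PointedCone.hull ℝ X₁).map (ExtendByZero.linearMap ℝ ψ₁) ⊔
        (PointedCone.hull ℝ X₂).map (ExtendByZero.linearMap ℝ ψ₂) := by
    rw [PointedCone.hull, Submodule.span_union, PointedCone.map, PointedCone.map,
      Submodule.map_span, Submodule.map_span]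
    rfl
  have hglue : extend ψ₁ (Pi.single k₁ (1 : ℤ)) 0 = extend ψ₂ (Pi.single k₂ (1 : ℤ)) 0 := by
    classical
    rw [extend_single_zero hψ.injective_left, extend_single_zero hψ.injective_right, hψ.apply_eq]
  rw [ehrhartSeries_convexHull ((hX₁.image _).union (hX₂.image _)) hsum,
    ehrhartSeries_convexHull hX₁ hsum₁, ehrhartSeries_convexHull hX₂ hsum₂, hhull,
    latticePoints_map_sup_map hψ hk₁ hround]
  refine hilbertSeries_map_sup_map (deg := (coordSum ℤ J).toAddMonoidHom)
    (deg₁ := (coordSum ℤ I₁).toAddMonoidHom) (deg₂ := (coordSum ℤ I₂).toAddMonoidHom)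
    (isFinitelyGraded_latticePoints hX₁ hsum₁) (isFinitelyGraded_latticePoints hX₂ hsum₂)
    (single_one_mem_latticePoints hk₁) (single_one_mem_latticePoints hk₂) ?_ hglue
    (fun _ _ => hψ.exists_zsmul_of_extend_add_extend_eq_zero)
    (coordSum_extend_zero hψ.injective_left) (coordSum_extend_zero hψ.injective_right)
  simp [coordSum_apply]

end OnePointGluing

section Hall

theorem exists_assignment_of_forall_sum_le {E V : Type*} [Fintype E] [DecidableEq V]
    (r : E → Finset V) (d : E → ℕ) (b : V → ℕ)
    (hall : ∀ F : Finset E, ∑ f ∈ F, d f ≤ ∑ i ∈ F.biUnion r, b i) :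
    ∃ m : E → V → ℕ, (∀ f, ∀ i ∉ r f, m f i = 0) ∧ (∀ f, ∑ i ∈ r f, m f i = d f) ∧
      ∀ i, ∑ f, m f i ≤ b i := by
  classical
  let t : (Σ f, Fin (d f)) → Finset (Σ i, Fin (b i)) := fun p => (r p.1).sigma fun _ => .univ
  have ht : ∀ S : Finset (Σ f, Fin (d f)), S.card ≤ (S.biUnion t).card := fun S =>
    calc S.card ≤ ((S.image Sigma.fst).sigma fun f => (.univ : Finset (Fin (d f)))).card :=
          Finset.card_le_card fun p hp => by simpa using ⟨p.2, hp⟩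
      _ = ∑ f ∈ S.image Sigma.fst, d f := by simp
      _ ≤ ∑ i ∈ (S.image Sigma.fst).biUnion r, b i := hall _
      _ = (((S.image Sigma.fst).biUnion r).sigma fun i => (.univ : Finset (Fin (b i)))).card := by
          simp
      _ = (S.biUnion t).card := by
          congr 1
          ext p
          simp [t]
  obtain ⟨g, hg_inj, hg⟩ := (Finset.all_card_le_biUnion_card_iff_exists_injective t).1 ht
  have hg_mem : ∀ f s, (g ⟨f, s⟩).1 ∈ r f := fun f s => (Finset.mem_sigma.1 (hg ⟨f, s⟩)).1
  refine ⟨fun f i => (Finset.univ.filter fun s => (g ⟨f, s⟩).1 = i).card, fun f i hi => ?_,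
    fun f => ?_, fun i => ?_⟩
  · simp only [Finset.card_eq_zero, Finset.filter_eq_empty_iff]
    rintro s - rfl
    exact hi (hg_mem f s)
  · rw [← Finset.card_eq_sum_card_fiberwise fun s _ => hg_mem f s, Finset.card_fin]
  · calc ∑ f, (Finset.univ.filter fun s => (g ⟨f, s⟩).1 = i).card
        = (Finset.univ.filter fun p => (g p).1 = i).card := by
          rw [← Finset.card_sigma]
          congr 1
          ext p
          simp
      _ ≤ (({i} : Finset V).sigma fun i => (.univ : Finset (Fin (b i)))).card :=
          Finset.card_le_card_of_injOn g (fun p hp => by simpa using hp) hg_inj.injOn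
      _ = b i := by simp

end Hall

section SubgraphEnergy

variable {V E : Type*} [DecidableEq V]

theorem count_toMultiset_mk (a b i : V) :
    s(a, b).toMultiset.count i = (if i = a then 1 else 0) + (if i = b then 1 else 0) := by
  change Multiset.count i {a, b} = _
  rw [Multiset.insert_eq_cons, Multiset.count_cons, Multiset.count_singleton, add_comm]

variable [Fintype E]

/-- The sum of the coordinates of the vertex `i` and of the edges at `i`, a loop counting twice. -/
def starSum (R : Type*) [CommRing R] (ends : E → Sym2 V) (i : V) : (V ⊕ E → R) →ₗ[R] R :=
  LinearMap.proj (Sum.inl i) + ∑ f, ((ends f).toMultiset.count i : R) • LinearMap.proj (Sum.inr f)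

theorem starSum_apply {R : Type*} [CommRing R] (ends : E → Sym2 V) (i : V) (x : V ⊕ E → R) :
    starSum R ends i x =
      x (Sum.inl i) + ∑ f, ((ends f).toMultiset.count i : R) * x (Sum.inr f) := by
  simp [starSum]

/-- The total energy of the subgraph with vertex set `N` and edge set `F`, all of whose endpoints
are meant to lie in `N`: the sum of the coordinates of `N` and of the edges outside `F` meeting `N`,
counted with their number of endpoints in `N`. The facet functionals of the cone have this form. -/
def subgraphEnergy (R : Type*) [CommRing R] (ends : E → Sym2 V) (N : Finset V) (F : Finset E) :
    (V ⊕ E → R) →ₗ[R] R :=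
  ∑ i ∈ N, starSum R ends i - 2 • ∑ f ∈ F, LinearMap.proj (Sum.inr f)

theorem subgraphEnergy_apply {R : Type*} [CommRing R] (ends : E → Sym2 V) (N : Finset V)
    (F : Finset E) (x : V ⊕ E → R) : subgraphEnergy R ends N F x =
      ∑ i ∈ N, starSum R ends i x - 2 * ∑ f ∈ F, x (Sum.inr f) := by
  simp [subgraphEnergy]

theorem intCast_subgraphEnergy (ends : E → Sym2 V) (N : Finset V) (F : Finset E)
    (z : V ⊕ E → ℤ) :
    (subgraphEnergy ℤ ends N F z : ℝ) = subgraphEnergy ℝ ends N F fun k => (z k : ℝ) := by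
  simp [subgraphEnergy_apply, starSum_apply]

theorem exists_endpoint_weights {ends : E → Sym2 V} {z : V ⊕ E → ℤ}
    (hz : ∀ N F, (∀ f ∈ F, ∀ i ∈ ends f, i ∈ N) → 0 ≤ subgraphEnergy ℤ ends N F z) :
    ∃ m : E → V → ℕ, (∀ f, ∀ i ∉ ends f, m f i = 0) ∧
      (∀ f, 2 * z (Sum.inr f) ≤ ∑ i ∈ (ends f).toFinset, m f i) ∧
      ∀ i, ∑ f, (m f i : ℤ) ≤ starSum ℤ ends i z := by
  have hstar : ∀ i, 0 ≤ starSum ℤ ends i z := fun i => by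
    simpa [subgraphEnergy_apply] using hz {i} ∅ (by simp)
  have hall : ∀ F : Finset E, ∑ f ∈ F, (2 * z (Sum.inr f)).toNat ≤
      ∑ i ∈ F.biUnion fun f => (ends f).toFinset, (starSum ℤ ends i z).toNat := fun F => by
    let F' := F.filter fun f => 0 ≤ z (Sum.inr f)
    zify
    calc ∑ f ∈ F, ((2 * z (Sum.inr f)).toNat : ℤ) = 2 * ∑ f ∈ F', z (Sum.inr f) := by
          rw [Finset.mul_sum, Finset.sum_filter]
          refine Finset.sum_congr rfl fun f _ => ?_
          split_ifs <;> omega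
      _ ≤ ∑ i ∈ F'.biUnion fun f => (ends f).toFinset, starSum ℤ ends i z := by
          rw [← sub_nonneg, ← subgraphEnergy_apply]
          exact hz _ _ fun f hf i hi => Finset.mem_biUnion.2 ⟨f, hf, by simpa using hi⟩
      _ ≤ ∑ i ∈ F.biUnion fun f => (ends f).toFinset, starSum ℤ ends i z :=
          Finset.sum_le_sum_of_subset_of_nonneg
            (Finset.biUnion_subset_biUnion_of_subset_left _ (Finset.filter_subset _ _))
            fun i _ _ => hstar i
      _ ≤ _ := Finset.sum_le_sum fun i _ => Int.self_le_toNat _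
  obtain ⟨m, hm_supp, hm_edge, hm_vertex⟩ := exists_assignment_of_forall_sum_le _ _ _ hall
  refine ⟨m, fun f i hi => hm_supp f i (by simpa using hi), fun f => ?_, fun i => ?_⟩
  · rw [hm_edge f]
    exact Int.self_le_toNat _
  · have hm_le : ∑ f, (m f i : ℤ) ≤ (starSum ℤ ends i z).toNat := mod_cast hm_vertex i
    rwa [Int.toNat_of_nonneg (hstar i)] at hm_le

end SubgraphEnergy

section CosmologicalCone

variable {V E : Type*} [DecidableEq V] [DecidableEq E]

/-- The point `p eₐ + q e_b + c e_f` of `ℝ^(V ⊕ E)`. -/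
def edgePoint (a b : V) (f : E) (p q c : ℝ) : V ⊕ E → ℝ :=
  Sum.elim (Pi.single a p + Pi.single b q) (Pi.single f c)

theorem edgePoint_eq_add_single (a b : V) (f : E) (p q c : ℝ) : edgePoint a b f p q c =
    Pi.single (Sum.inl a) p + Pi.single (Sum.inl b) q + Pi.single (Sum.inr f) c := by
  ext (i | g) <;> simp [edgePoint, Pi.single_apply]

theorem edgePoint_swap (a b : V) (f : E) (p q c : ℝ) :
    edgePoint b a f q p c = edgePoint a b f p q c := by
  rw [edgePoint, edgePoint, add_comm]

/-- The three points that an edge `f` with endpoints `e` contributes to `cosmoVertices`. -/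
def edgeVertices (e : Sym2 V) (f : E) : Set (V ⊕ E → ℝ) :=
  {x | ∃ a b, e = s(a, b) ∧
    x ∈ ({edgePoint a b f 1 1 (-1), edgePoint a b f 1 (-1) 1, edgePoint a b f (-1) 1 1} : Set _)}

theorem edgeVertices_mk (a b : V) (f : E) : edgeVertices s(a, b) f =
    {edgePoint a b f 1 1 (-1), edgePoint a b f 1 (-1) 1, edgePoint a b f (-1) 1 1} := by
  refine Set.Subset.antisymm ?_ fun x hx => ⟨a, b, rfl, hx⟩
  rintro x ⟨a', b', hab, hx⟩
  rcases Sym2.eq_iff.1 hab with ⟨rfl, rfl⟩ | ⟨rfl, rfl⟩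
  · exact hx
  · simpa only [edgePoint_swap, Set.insert_comm, Set.pair_comm] using hx

theorem cosmoVertices_eq_iUnion (ends : E → Sym2 V) :
    cosmoVertices ends = ⋃ f, edgeVertices (ends f) f := by
  ext x
  simp only [cosmoVertices, edgeVertices, edgePoint_eq_add_single, Pi.single_neg, sub_eq_add_neg,
    Set.mem_iUnion, Set.mem_ofPred_eq, Set.mem_insert_iff, Set.mem_singleton_iff]

theorem finite_cosmoVertices [Finite E] (ends : E → Sym2 V) : (cosmoVertices ends).Finite := by
  rw [cosmoVertices_eq_iUnion]
  refine Set.finite_iUnion fun f => ?_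
  induction ends f with | h a b => ?_
  rw [edgeVertices_mk]
  exact Set.toFinite _

theorem exists_edgePoint_of_mem_cosmoVertices {ends : E → Sym2 V} {x : V ⊕ E → ℝ}
    (hx : x ∈ cosmoVertices ends) : ∃ a b f p q c, ends f = s(a, b) ∧ x = edgePoint a b f p q c ∧
      p + q + c = 1 ∧ 0 ≤ p + q ∧ 0 ≤ p + c ∧ 0 ≤ q + c := by
  rw [cosmoVertices_eq_iUnion] at hx
  obtain ⟨f, a, b, hf, rfl | rfl | rfl⟩ := Set.mem_iUnion.1 hx <;>
    exact ⟨a, b, f, _, _, _, hf, rfl, by norm_num⟩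

/-- The cone over the cosmological polytope. -/
def cosmoCone (ends : E → Sym2 V) : PointedCone ℝ (V ⊕ E → ℝ) :=
  PointedCone.hull ℝ (cosmoVertices ends)

theorem edgePoint_mem_cosmoCone {ends : E → Sym2 V} {a b : V} {f : E} (hf : ends f = s(a, b))
    {p q c : ℝ} (hpq : 0 ≤ p + q) (hpc : 0 ≤ p + c) (hqc : 0 ≤ q + c) :
    edgePoint a b f p q c ∈ cosmoCone ends := by
  have vertex_mem : ∀ x ∈ ({edgePoint a b f 1 1 (-1), edgePoint a b f 1 (-1) 1,
      edgePoint a b f (-1) 1 1} : Set _), x ∈ cosmoCone ends := fun x hx =>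
    PointedCone.subset_hull (cosmoVertices_eq_iUnion ends ▸ Set.mem_iUnion.2 ⟨f, a, b, hf, hx⟩)
  have hcomb : edgePoint a b f p q c = ((p + q) / 2) • edgePoint a b f 1 1 (-1) +
      ((p + c) / 2) • edgePoint a b f 1 (-1) 1 + ((q + c) / 2) • edgePoint a b f (-1) 1 1 := by
    ext (i | g) <;> simp only [edgePoint, Sum.elim_inl, Sum.elim_inr, Pi.add_apply, Pi.smul_apply,
      Pi.single_apply, smul_eq_mul] <;> split_ifs <;> ring
  rw [hcomb]
  refine add_mem (add_mem ?_ ?_) ?_ <;>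
    exact PointedCone.smul_mem _ (by positivity) (vertex_mem _ (by simp))

theorem single_inl_mem_cosmoCone {ends : E → Sym2 V} {f : E} {i : V} (hi : i ∈ ends f) {r : ℝ}
    (hr : 0 ≤ r) : Pi.single (Sum.inl i) r ∈ cosmoCone ends := by
  obtain ⟨j, hj⟩ := Sym2.mem_iff_exists.1 hi
  convert edgePoint_mem_cosmoCone hj (p := r) (q := 0) (c := 0) (by simpa) (by simpa) (by simp)
  ext (k | g) <;> simp [edgePoint, Pi.single_apply]

theorem sumElim_single_mem_cosmoCone {ends : E → Sym2 V} {f : E} {m : V → ℝ} {c : ℝ}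
    (hm : ∀ i, 0 ≤ m i) (hm_supp : ∀ i ∉ ends f, m i = 0)
    (hm_sum : 2 * c ≤ ∑ i ∈ (ends f).toFinset, m i) :
    Sum.elim (fun i => m i - (ends f).toMultiset.count i * c) (Pi.single f c) ∈
      cosmoCone ends := by
  obtain ⟨a, b, hab⟩ : ∃ a b, ends f = s(a, b) := Sym2.exists.1 ⟨_, rfl⟩
  have ha := hm a
  have hb := hm b
  have hsupp : ∀ i, i ≠ a → i ≠ b → m i = 0 := fun i hia hib =>
    hm_supp i (by simp [hab, hia, hib])
  rw [hab] at hm_sum ⊢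
  rcases eq_or_ne a b with rfl | hne
  · have hma : 2 * c ≤ m a := by simpa [Sym2.toFinset_mk_eq] using hm_sum
    convert edgePoint_mem_cosmoCone hab (p := m a - c) (q := -c) (c := c) (by linarith)
      (by linarith) (by linarith) using 1
    ext (i | g)
    · by_cases hi : i = a
      · simp only [edgePoint, count_toMultiset_mk, hi, Sum.elim_inl, Pi.add_apply,
          Pi.single_eq_same, if_true, Nat.cast_add, Nat.cast_one]
        ring
      · simp [edgePoint, count_toMultiset_mk, hi, hsupp]
    · rfl
  · have hmab : 2 * c ≤ m a + m b := by
      simpa [Sym2.toFinset_mk_eq, Finset.sum_pair hne] using hm_sum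
    convert edgePoint_mem_cosmoCone hab (p := m a - c) (q := m b - c) (c := c) (by linarith)
      (by linarith) (by linarith) using 1
    ext (i | g)
    · by_cases hia : i = a
      · simp [edgePoint, count_toMultiset_mk, hia, hne]
      by_cases hib : i = b
      · simp [edgePoint, count_toMultiset_mk, hib, hne.symm]
      · simp [edgePoint, count_toMultiset_mk, hia, hib, hsupp]
    · rfl

theorem starSum_edgePoint [Fintype E] {ends : E → Sym2 V} {a b : V} {f : E}
    (hf : ends f = s(a, b)) (i : V) (p q c : ℝ) : starSum ℝ ends i (edgePoint a b f p q c) =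
      (Pi.single a (p + c) : V → ℝ) i + (Pi.single b (q + c) : V → ℝ) i := by
  rw [starSum_apply, Finset.sum_eq_single f]
  · simp only [edgePoint, hf, count_toMultiset_mk, Sum.elim_inl, Sum.elim_inr, Pi.add_apply,
      Pi.single_apply, if_true, Nat.cast_add, Nat.cast_ite, Nat.cast_one, Nat.cast_zero]
    split_ifs <;> ring
  · intro g _ hg
    simp [edgePoint, hg]
  · simp

theorem subgraphEnergy_nonneg_of_mem_cosmoCone [Fintype E] {ends : E → Sym2 V} {N : Finset V}
    {F : Finset E} (hNF : ∀ f ∈ F, ∀ i ∈ ends f, i ∈ N) {x : V ⊕ E → ℝ} (hx : x ∈ cosmoCone ends) :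
    0 ≤ subgraphEnergy ℝ ends N F x := by
  refine nonneg_of_mem_hull (fun y hy => ?_) hx
  obtain ⟨a, b, f, p, q, c, hf, rfl, -, hpq, hpc, hqc⟩ := exists_edgePoint_of_mem_cosmoVertices hy
  rw [subgraphEnergy_apply, sub_nonneg]
  have hedge : ∑ g ∈ F, edgePoint a b f p q c (Sum.inr g) = if f ∈ F then c else 0 := by
    simp [edgePoint]
  have hstar : ∑ i ∈ N, starSum ℝ ends i (edgePoint a b f p q c) =
      (if a ∈ N then p + c else 0) + (if b ∈ N then q + c else 0) := by
    simp [starSum_edgePoint hf, Finset.sum_add_distrib]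
  rw [hedge, hstar]
  by_cases hfF : f ∈ F
  · have ha : a ∈ N := hNF f hfF a (by simp [hf])
    have hb : b ∈ N := hNF f hfF b (by simp [hf])
    simp only [hfF, ha, hb, if_true]
    linarith
  · simp only [hfF, if_false, mul_zero]
    positivity

theorem intCast_mem_cosmoCone [Finite V] [Fintype E] {ends : E → Sym2 V}
    (hiso : ∀ i, ∃ f, i ∈ ends f) {z : V ⊕ E → ℤ}
    (hz : ∀ N F, (∀ f ∈ F, ∀ i ∈ ends f, i ∈ N) → 0 ≤ subgraphEnergy ℤ ends N F z) :
    (fun k => (z k : ℝ)) ∈ cosmoCone ends := by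
  cases nonempty_fintype V
  obtain ⟨m, hm_supp, hm_edge, hm_vertex⟩ := exists_endpoint_weights hz
  have hdecomp : (fun k => (z k : ℝ)) =
      ∑ f, Sum.elim (fun i => (m f i : ℝ) - (ends f).toMultiset.count i * (z (Sum.inr f) : ℝ))
        (Pi.single f (z (Sum.inr f) : ℝ)) +
      ∑ i, Pi.single (Sum.inl i) ((starSum ℤ ends i z : ℝ) - ∑ f, (m f i : ℝ)) := by
    ext (i | g)
    · simp [starSum_apply, Finset.sum_apply, Pi.single_apply]
    · simp [Finset.sum_apply, Pi.single_apply]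
  rw [hdecomp]
  refine add_mem (sum_mem fun f _ => sumElim_single_mem_cosmoCone ?_ ?_ ?_) (sum_mem fun i _ => ?_)
  · exact fun i => Nat.cast_nonneg _
  · exact fun i hi => by rw [hm_supp f i hi, Nat.cast_zero]
  · exact_mod_cast hm_edge f
  · obtain ⟨f, hf⟩ := hiso i
    exact single_inl_mem_cosmoCone hf (sub_nonneg.2 (by exact_mod_cast hm_vertex i))

theorem roundsDownAt_cosmoCone [Finite V] [Finite E] {ends : E → Sym2 V}
    (hiso : ∀ i, ∃ f, i ∈ ends f) (v : V) : RoundsDownAt (cosmoCone ends) (Sum.inl v) := by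
  cases nonempty_fintype E
  intro x hx hint
  refine intCast_mem_cosmoCone hiso fun N F hNF => ?_
  have hround : ∀ k ≠ Sum.inl v, (⌊x k⌋ : ℝ) = x k := fun k hk => by
    obtain ⟨n, hn⟩ := hint k hk
    rw [hn, Int.floor_intCast]
  have hfloor : (fun k => (⌊x k⌋ : ℝ)) = x - Pi.single (Sum.inl v) (Int.fract (x (Sum.inl v))) := by
    ext k
    rcases eq_or_ne k (Sum.inl v) with rfl | hk
    · simp
    · simp [hk, hround k hk]
  have hsingle : subgraphEnergy ℝ ends N F
      (Pi.single (Sum.inl v) (Int.fract (x (Sum.inl v)))) < 1 := by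
    have hval : subgraphEnergy ℝ ends N F (Pi.single (Sum.inl v) (Int.fract (x (Sum.inl v)))) =
        if v ∈ N then Int.fract (x (Sum.inl v)) else 0 := by
      simp [subgraphEnergy_apply, starSum_apply, Pi.single_apply]
    rw [hval]
    split_ifs
    · exact Int.fract_lt_one _
    · exact one_pos
  have hx_nonneg := subgraphEnergy_nonneg_of_mem_cosmoCone hNF hx
  have hgt : (-1 : ℝ) < (subgraphEnergy ℤ ends N F fun k => ⌊x k⌋ : ℤ) := by
    rw [intCast_subgraphEnergy, hfloor, map_sub]
    linarith
  have hgt' : -1 < subgraphEnergy ℤ ends N F fun k => ⌊x k⌋ := by exact_mod_cast hgt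
  omega

theorem coordSum_edgePoint [Fintype V] [Fintype E] (a b : V) (f : E) (p q c : ℝ) :
    coordSum ℝ (V ⊕ E) (edgePoint a b f p q c) = p + q + c := by
  simp [coordSum_apply, edgePoint, Finset.sum_add_distrib]

theorem coordSum_eq_one_of_mem_cosmoVertices [Fintype V] [Fintype E] {ends : E → Sym2 V}
    {x : V ⊕ E → ℝ} (hx : x ∈ cosmoVertices ends) : coordSum ℝ (V ⊕ E) x = 1 := by
  obtain ⟨a, b, f, p, q, c, -, rfl, hsum, -⟩ := exists_edgePoint_of_mem_cosmoVertices hx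
  rw [coordSum_edgePoint, hsum]

end CosmologicalCone

section OneSum

open Function (ExtendByZero.linearMap)

theorem extendByZero_edgePoint {V E V' E' : Type*} [DecidableEq V] [DecidableEq E] [DecidableEq V']
    [DecidableEq E'] {φ : V → V'} {g : E → E'} (hφ : φ.Injective) (hg : g.Injective)
    (a b : V) (f : E) (p q c : ℝ) :
    ExtendByZero.linearMap ℝ (Sum.map φ g) (edgePoint a b f p q c) =
      edgePoint (φ a) (φ b) (g f) p q c := by
  have hsingle : ∀ (k : V ⊕ E) (r : ℝ), ExtendByZero.linearMap ℝ (Sum.map φ g) (Pi.single k r) =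
      Pi.single (Sum.map φ g k) r := extend_single_zero (hφ.sumMap hg)
  simp only [edgePoint_eq_add_single, map_add, hsingle, Sum.map_inl, Sum.map_inr]

theorem image_edgeVertices {V E V' E' : Type*} [DecidableEq V] [DecidableEq E] [DecidableEq V']
    [DecidableEq E'] {φ : V → V'} {g : E → E'} (hφ : φ.Injective) (hg : g.Injective)
    (e : Sym2 V) (f : E) :
    ExtendByZero.linearMap ℝ (Sum.map φ g) '' edgeVertices e f =
      edgeVertices (e.map φ) (g f) := by
  induction e with | h a b => ?_
  simp only [Sym2.map_mk, edgeVertices_mk, Set.image_insert_eq, Set.image_singleton,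
    extendByZero_edgePoint hφ hg]

variable {V₁ E₁ V₂ E₂ W : Type*} {φ₁ : V₁ → W} {φ₂ : V₂ → W}

theorem cosmoVertices_oneSumEnds [DecidableEq V₁] [DecidableEq E₁] [DecidableEq V₂] [DecidableEq E₂]
    [DecidableEq W] (ends₁ : E₁ → Sym2 V₁) (ends₂ : E₂ → Sym2 V₂)
    (hφ₁ : φ₁.Injective) (hφ₂ : φ₂.Injective) :
    cosmoVertices (oneSumEnds ends₁ ends₂ φ₁ φ₂) =
      ExtendByZero.linearMap ℝ (Sum.map φ₁ Sum.inl) '' cosmoVertices ends₁ ∪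
        ExtendByZero.linearMap ℝ (Sum.map φ₂ Sum.inr) '' cosmoVertices ends₂ := by
  simp only [cosmoVertices_eq_iUnion, Set.iUnion_sum, Set.image_iUnion, oneSumEnds, Sum.elim_inl,
    Sum.elim_inr, image_edgeVertices hφ₁ Sum.inl_injective,
    image_edgeVertices hφ₂ Sum.inr_injective]

theorem isOnePointGluing_sumMap {v : V₁} {w : V₂} (hφ₁ : φ₁.Injective) (hφ₂ : φ₂.Injective)
    (hvw : φ₁ v = φ₂ w) (hmeet : Set.range φ₁ ∩ Set.range φ₂ = {φ₁ v}) :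
    IsOnePointGluing (Sum.map φ₁ (Sum.inl : E₁ → E₁ ⊕ E₂)) (Sum.map φ₂ Sum.inr)
      (Sum.inl v) (Sum.inl w) where
  injective_left := hφ₁.sumMap Sum.inl_injective
  injective_right := hφ₂.sumMap Sum.inr_injective
  apply_eq := congrArg Sum.inl hvw
  eq_of_apply_eq := by
    rintro (i | f) (j | g) h <;> simp only [Sum.map_inl, Sum.map_inr, Sum.inl.injEq, Sum.inr.injEq,
      reduceCtorEq] at h
    have hi : φ₁ i = φ₁ v := hmeet.subset ⟨⟨i, rfl⟩, ⟨j, h.symm⟩⟩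
    rw [hφ₁ hi, hφ₂ (h.symm.trans (hi.trans hvw))]
    exact ⟨rfl, rfl⟩

theorem ehrhartSeries_cosmoPolytope_oneSumEnds
    [Finite V₁] [Finite E₁] [DecidableEq V₁] [DecidableEq E₁]
    [Finite V₂] [Finite E₂] [DecidableEq V₂] [DecidableEq E₂] [Finite W] [DecidableEq W]
    {ends₁ : E₁ → Sym2 V₁} {ends₂ : E₂ → Sym2 V₂} {v : V₁} {w : V₂}
    (hv : ∃ f, v ∈ ends₁ f) (hiso₂ : ∀ i, ∃ f, i ∈ ends₂ f)
    (hφ₁ : φ₁.Injective) (hφ₂ : φ₂.Injective) (hvw : φ₁ v = φ₂ w)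
    (hmeet : Set.range φ₁ ∩ Set.range φ₂ = {φ₁ v}) :
    ehrhartSeries (cosmoPolytope (oneSumEnds ends₁ ends₂ φ₁ φ₂)) =
      ehrhartSeries (cosmoPolytope ends₁) *
        (ehrhartSeries (cosmoPolytope ends₂) * (1 - PowerSeries.X)) := by
  cases nonempty_fintype V₁
  cases nonempty_fintype E₁
  cases nonempty_fintype V₂
  cases nonempty_fintype E₂
  obtain ⟨f, hf⟩ := hv
  obtain ⟨g, hg⟩ := hiso₂ w
  rw [cosmoPolytope, cosmoVertices_oneSumEnds _ _ hφ₁ hφ₂]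
  exact ehrhartSeries_convexHull_union (isOnePointGluing_sumMap hφ₁ hφ₂ hvw hmeet)
    (finite_cosmoVertices _) (finite_cosmoVertices _)
    (fun _ => coordSum_eq_one_of_mem_cosmoVertices) (fun _ => coordSum_eq_one_of_mem_cosmoVertices)
    (single_inl_mem_cosmoCone hf zero_le_one) (single_inl_mem_cosmoCone hg zero_le_one)
    (roundsDownAt_cosmoCone hiso₂ w)

theorem card_add_one_of_range_inter_range_eq_singleton [Fintype V₁] [Fintype V₂] [Fintype W]
    {p : W} (hφ₁ : φ₁.Injective) (hφ₂ : φ₂.Injective)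
    (hcover : Set.range φ₁ ∪ Set.range φ₂ = Set.univ)
    (hmeet : Set.range φ₁ ∩ Set.range φ₂ = {p}) :
    Fintype.card W + 1 = Fintype.card V₁ + Fintype.card V₂ := by
  have hcard := Set.ncard_union_add_ncard_inter (Set.range φ₁) (Set.range φ₂)
  rwa [hcover, hmeet, Set.ncard_univ, Set.ncard_singleton, ← Set.image_univ, ← Set.image_univ,
    Set.ncard_image_of_injective _ hφ₁, Set.ncard_image_of_injective _ hφ₂, Set.ncard_univ,
    Set.ncard_univ, Nat.card_eq_fintype_card, Nat.card_eq_fintype_card,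
    Nat.card_eq_fintype_card] at hcard

end OneSum

namespace IsHStarPoly

variable {I I₁ I₂ : Type*} {P : Set (I → ℝ)} {P₁ : Set (I₁ → ℝ)} {P₂ : Set (I₂ → ℝ)}
  {d d₁ d₂ : ℕ} {h h' h₁ h₂ : Polynomial ℚ}

theorem unique (hh : IsHStarPoly P d h) (hh' : IsHStarPoly P d h') : h = h' :=
  Polynomial.coe_injective ℚ (hh.symm.trans hh')

theorem mul_of_ehrhartSeries_eq (hh₁ : IsHStarPoly P₁ d₁ h₁) (hh₂ : IsHStarPoly P₂ d₂ h₂)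
    (hP : ehrhartSeries P = ehrhartSeries P₁ * (ehrhartSeries P₂ * (1 - PowerSeries.X))) :
    IsHStarPoly P (d₁ + d₂) (h₁ * h₂) := by
  rw [IsHStarPoly, Polynomial.coe_mul, ← hh₁, ← hh₂, hP]
  ring

end IsHStarPoly

/-- Let `G = G₁ ⊕ G₂` be a `1`-sum of graphs `G₁` and `G₂` (obtained from the
disjoint union by identifying the vertex `v` of `G₁` with the vertex `w` of `G₂`).  Then
`h*(C_G; z) = h*(C_{G₁}; z) · h*(C_{G₂}; z)`. -/
theorem hstar_of_one_sum
    {V₁ E₁ V₂ E₂ W : Type*}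
    [Fintype V₁] [Fintype E₁] [DecidableEq V₁] [DecidableEq E₁]
    [Fintype V₂] [Fintype E₂] [DecidableEq V₂] [DecidableEq E₂]
    [Fintype W] [DecidableEq W]
    (ends₁ : E₁ → Sym2 V₁) (ends₂ : E₂ → Sym2 V₂)
    (hiso₁ : ∀ v : V₁, ∃ f : E₁, v ∈ ends₁ f)
    (hiso₂ : ∀ v : V₂, ∃ f : E₂, v ∈ ends₂ f)
    (v : V₁) (w : V₂) (φ₁ : V₁ → W) (φ₂ : V₂ → W)
    (hφ₁ : Function.Injective φ₁) (hφ₂ : Function.Injective φ₂)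
    (hvw : φ₁ v = φ₂ w)
    (hcover : Set.range φ₁ ∪ Set.range φ₂ = Set.univ)
    (hmeet : Set.range φ₁ ∩ Set.range φ₂ = {φ₁ v})
    (h₁ h₂ H : Polynomial ℚ)
    (hh₁ : IsHStarPoly (cosmoPolytope ends₁)
      (Fintype.card V₁ + Fintype.card E₁ - 1) h₁)
    (hh₂ : IsHStarPoly (cosmoPolytope ends₂)
      (Fintype.card V₂ + Fintype.card E₂ - 1) h₂)
    (hH : IsHStarPoly (cosmoPolytope (oneSumEnds ends₁ ends₂ φ₁ φ₂))
      (Fintype.card W + Fintype.card (E₁ ⊕ E₂) - 1) H) :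
    H = h₁ * h₂ := by
  have hdim : Fintype.card W + Fintype.card (E₁ ⊕ E₂) - 1 =
      (Fintype.card V₁ + Fintype.card E₁ - 1) + (Fintype.card V₂ + Fintype.card E₂ - 1) := by
    have hcard := card_add_one_of_range_inter_range_eq_singleton hφ₁ hφ₂ hcover hmeet
    have hpos₁ := Fintype.card_pos_iff.2 ⟨v⟩
    have hpos₂ := Fintype.card_pos_iff.2 ⟨w⟩
    rw [Fintype.card_sum]
    omega
  have hehr := ehrhartSeries_cosmoPolytope_oneSumEnds (hiso₁ v) hiso₂ hφ₁ hφ₂ hvw hmeet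
  exact hH.unique (hdim ▸ hh₁.mul_of_ehrhartSeries_eq hh₂ hehr)
end

section
/- Let G = (V,E) be a graph and let i, j ∈ V. Let G + f be the graph on vertex set V and edge multiset E ∪ {f}, where f ∉ E is a new (possibly parallel) edge between i and j. Then (1+z)·h*(C_G; z) ≼ h*(C_{G+f}; z), and equality holds if and only if f is a loop (i.e., i = j). -/
open Polynomial Pointwise

/-- The endpoint map of the graph `G + f` obtained from `G` by adding one new edge `f`
(the edge `none`) with endpoints `i` and `j`. -/
def addEdgeEnds {V E : Type*} (ends : E → Sym2 V) (i j : V) : Option E → Sym2 V :=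
  fun o => Option.elim o s(i, j) ends

/-!
The cone over `C_G` is cut out by one inequality for each set of vertices, and the left-hand sides
of these inequalities are submodular. Passing from `G` to `G + f` adds one coordinate to the cone.
Over a value `-n ≤ 0` of it the fibre is a translate of the old cone, and over `n ≥ 0` it is the old
cone swept along the segment from `-n (e_i - e_j)` to `n (e_i - e_j)`. Each of the `2n` unit steps
of the sweep adds the lattice points from which a step in the direction `e_i - e_j` leaves the cone.
If `i ≠ j`, submodularity shows that there is exactly one of these on each line in this direction
that projects into the cone of the contraction `G / ij`. Summing over `n` gives
`h*(G + f) = (1 + z) h*(G) + 2 z h*(G / ij)`, while the last term is absent if `f` is a loop. By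
induction on the edges all coefficients of `h*` are nonnegative, and the constant one is `1`.
-/

namespace Cosmo

section ConvexGeometry

variable {F : Type*} [AddCommGroup F] [Module ℝ F]

lemma mem_smul_convexHull_iff {S : Set F} {L : F →ₗ[ℝ] ℝ} (hL : ∀ y ∈ S, L y = 1) {t : ℝ}
    (ht : 0 < t) {x : F} :
    x ∈ t • convexHull ℝ S ↔ x ∈ PointedCone.hull ℝ S ∧ L x = t := by
  constructor
  · rintro ⟨y, hy, rfl⟩
    have hS : S ⊆ (PointedCone.hull ℝ S : Set F) ∩ {y | L y = 1} := fun z hz =>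
      ⟨PointedCone.subset_hull hz, hL z hz⟩
    obtain ⟨hy_hull, hLy⟩ := convexHull_min hS
      ((PointedCone.hull ℝ S).convex.inter (convex_hyperplane L.isLinear 1)) hy
    exact ⟨PointedCone.smul_mem _ ht.le hy_hull, by simp [show L y = 1 from hLy]⟩
  · rintro ⟨hx, rfl⟩
    obtain ⟨c, hcS, hc, rfl⟩ := PointedCone.mem_hull_set.1 hx
    have hsum : L (c.sum fun y r => r • y) = ∑ y ∈ c.support, c y := by
      rw [Finsupp.sum, map_sum]
      exact Finset.sum_congr rfl fun y hy => by simp [hL y (hcS hy)]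
    rw [hsum] at ht ⊢
    refine ⟨c.support.centerMass c id,
      Finset.centerMass_mem_convexHull _ (fun y _ => hc y) ht fun y hy => hcS hy, ?_⟩
    exact smul_inv_smul₀ ht.ne' _

end ConvexGeometry

section CutCone

variable {R : Type*} [CommRing R] [LinearOrder R]
variable {V E : Type*} [DecidableEq V]

/-- The contribution of an edge with coordinate `a` and endpoints `s` to the cut functional of
`A`: it is `min (2 * a) 0`, `a` or `0` according to whether both, one or none of the endpoints lie
in `A`. -/
def edgeCut (a : R) (s : Sym2 V) (A : Finset V) : R :=
  Sym2.lift ⟨fun i j =>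
    if i ∈ A then (if j ∈ A then min (2 * a) 0 else a) else (if j ∈ A then a else 0),
    fun i j => by beta_reduce; split_ifs <;> rfl⟩ s

lemma edgeCut_mk (a : R) (i j : V) (A : Finset V) :
    edgeCut a s(i, j) A =
      if i ∈ A then (if j ∈ A then min (2 * a) 0 else a) else (if j ∈ A then a else 0) :=
  rfl

lemma edgeCut_zero (s : Sym2 V) (A : Finset V) : edgeCut (0 : R) s A = 0 := by
  induction s with | _ i j
  simp [edgeCut_mk]

lemma edgeCut_univ [Fintype V] (a : R) (s : Sym2 V) :
    edgeCut a s Finset.univ = min (2 * a) 0 := by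
  induction s with | _ i j
  simp [edgeCut_mk]

/-- The functional whose nonnegativity for all `A` cuts out the cone over the cosmological
polytope. -/
def cut [Fintype E] (ends : E → Sym2 V) (x : V ⊕ E → R) (A : Finset V) : R :=
  ∑ v ∈ A, x (Sum.inl v) + ∑ f, edgeCut (x (Sum.inr f)) (ends f) A

/-- The basis vector of the vertex `v`. -/
def vertexVec (v : V) : V ⊕ E → R := Sum.elim (Pi.single v 1) 0

lemma cut_add_smul_vertexVec [Fintype E] (ends : E → Sym2 V) (x : V ⊕ E → R) (c : R) (v : V)
    (A : Finset V) :
    cut ends (x + c • vertexVec v) A = cut ends x A + if v ∈ A then c else 0 := by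
  simp [cut, vertexVec, Finset.sum_add_distrib, ← Finset.mul_sum, add_right_comm]

lemma cut_add_smul_sub [Fintype E] (ends : E → Sym2 V) (x : V ⊕ E → R) (c : R) (i j : V)
    (A : Finset V) :
    cut ends (x + c • (vertexVec i - vertexVec j)) A =
      cut ends x A + (if i ∈ A then c else 0) - if j ∈ A then c else 0 := by
  rw [show x + c • (vertexVec i - vertexVec j) = x + c • vertexVec i + (-c) • vertexVec j by module,
    cut_add_smul_vertexVec, cut_add_smul_vertexVec]
  split_ifs <;> ring

variable [IsStrictOrderedRing R]

lemma edgeCut_le_abs (a : R) (s : Sym2 V) (A : Finset V) : edgeCut a s A ≤ |a| := by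
  induction s with | _ i j
  rw [edgeCut_mk]
  grind

lemma edgeCut_add_le (a b : R) (s : Sym2 V) (A : Finset V) :
    edgeCut a s A + edgeCut b s A ≤ edgeCut (a + b) s A := by
  induction s with | _ i j
  simp only [edgeCut_mk]
  grind

lemma edgeCut_mul {c : R} (hc : 0 ≤ c) (a : R) (s : Sym2 V) (A : Finset V) :
    edgeCut (c * a) s A = c * edgeCut a s A := by
  induction s with | _ i j
  simp only [edgeCut_mk, mul_ite, mul_zero, mul_min_of_nonneg _ _ hc, mul_left_comm]

lemma edgeCut_union_add_edgeCut_inter_le (a : R) (s : Sym2 V) (A B : Finset V) :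
    edgeCut a s (A ∪ B) + edgeCut a s (A ∩ B) ≤ edgeCut a s A + edgeCut a s B := by
  induction s with | _ i j
  simp only [edgeCut_mk, Finset.mem_union, Finset.mem_inter]
  grind

variable [Fintype E]

lemma cut_union_add_cut_inter_le (ends : E → Sym2 V) (x : V ⊕ E → R) (A B : Finset V) :
    cut ends x (A ∪ B) + cut ends x (A ∩ B) ≤ cut ends x A + cut ends x B := by
  have hedges := Finset.sum_le_sum fun f (_ : f ∈ Finset.univ) =>
    edgeCut_union_add_edgeCut_inter_le (x (Sum.inr f)) (ends f) A B
  have hverts := Finset.sum_union_inter (s₁ := A) (s₂ := B) (f := fun v => x (Sum.inl v))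
  simp only [Finset.sum_add_distrib] at hedges
  unfold cut
  linarith

variable (R) in
/-- The cone cut out by all cut inequalities. Over `ℝ` it is the cone over the cosmological
polytope; over `ℤ` it consists of the lattice points of that cone. -/
def cutCone (ends : E → Sym2 V) : PointedCone R (V ⊕ E → R) where
  carrier := {x | ∀ A, 0 ≤ cut ends x A}
  zero_mem' A := by simp [cut, edgeCut_zero]
  add_mem' {x y} hx hy A := by
    have hedges := Finset.sum_le_sum fun f (_ : f ∈ Finset.univ) =>
      edgeCut_add_le (x (Sum.inr f)) (y (Sum.inr f)) (ends f) A
    have hA := add_nonneg (hx A) (hy A)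
    simp only [Finset.sum_add_distrib] at hedges
    simp only [cut, Pi.add_apply, Finset.sum_add_distrib] at hA ⊢
    linarith
  smul_mem' c x hx A := by
    have hcut : cut ends (c • x) A = c.1 * cut ends x A := by
      simp only [cut, Pi.smul_apply, ← Nonneg.coe_smul, smul_eq_mul, edgeCut_mul c.2,
        Finset.mul_sum, mul_add]
    rw [hcut]
    exact mul_nonneg c.2 (hx A)

lemma mem_cutCone {ends : E → Sym2 V} {x : V ⊕ E → R} :
    x ∈ cutCone R ends ↔ ∀ A, 0 ≤ cut ends x A :=
  Iff.rfl

/-- Submodularity makes the lower bounds on `s` coming from sets that contain `i` but not `j`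
compatible with the upper bounds coming from sets that contain `j` but not `i`. -/
lemma exists_forall_add_smul_sub_mem_cutCone_iff [Finite V] (ends : E → Sym2 V) {i j : V}
    (hij : i ≠ j) {x : V ⊕ E → R} (hx : ∀ A, (i ∈ A ↔ j ∈ A) → 0 ≤ cut ends x A) :
    ∃ A B : Finset V, i ∈ A ∧ j ∉ A ∧ i ∉ B ∧ j ∈ B ∧ 0 ≤ cut ends x A + cut ends x B ∧
      ∀ s : R, x + s • (vertexVec i - vertexVec j) ∈ cutCone R ends ↔
        -cut ends x A ≤ s ∧ s ≤ cut ends x B := by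
  cases nonempty_fintype V
  obtain ⟨A, hA, hAmin⟩ := Finset.exists_min_image
    (Finset.univ.filter fun A : Finset V => i ∈ A ∧ j ∉ A) (cut ends x) ⟨{i}, by simp [hij.symm]⟩
  obtain ⟨B, hB, hBmin⟩ := Finset.exists_min_image
    (Finset.univ.filter fun B : Finset V => i ∉ B ∧ j ∈ B) (cut ends x) ⟨{j}, by simp [hij]⟩
  simp only [Finset.mem_filter_univ] at hA hAmin hB hBmin
  refine ⟨A, B, hA.1, hA.2, hB.1, hB.2, ?_, fun s => ⟨fun hs => ?_, fun hs C => ?_⟩⟩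
  · have hunion := hx (A ∪ B) (by simp [hA, hB])
    have hinter := hx (A ∩ B) (by simp [hA, hB])
    linarith [cut_union_add_cut_inter_le ends x A B]
  · have hsA := hs A
    have hsB := hs B
    simp only [cut_add_smul_sub, hA, hB, if_true, if_false] at hsA hsB
    constructor <;> linarith
  · rw [cut_add_smul_sub]
    by_cases hi : i ∈ C <;> by_cases hj : j ∈ C <;> simp only [hi, hj, if_true, if_false]
    · linarith [hx C (by simp [hi, hj])]
    · linarith [hAmin C ⟨hi, hj⟩]
    · linarith [hBmin C ⟨hi, hj⟩]
    · linarith [hx C (by simp [hi, hj])]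

lemma add_smul_sub_mem_cutCone_of_le_of_le {ends : E → Sym2 V} {x : V ⊕ E → R} {i j : V}
    {s r t : R} (hsr : s ≤ r) (hrt : r ≤ t)
    (hs : x + s • (vertexVec i - vertexVec j) ∈ cutCone R ends)
    (ht : x + t • (vertexVec i - vertexVec j) ∈ cutCone R ends) :
    x + r • (vertexVec i - vertexVec j) ∈ cutCone R ends := by
  intro A
  have hsA := hs A
  have htA := ht A
  rw [cut_add_smul_sub] at *
  split_ifs at * <;> linarith

/-- The fibre, over the value `a` of the coordinate of the new edge, of the cut cone of the graph
obtained by adding an edge with endpoints `s`. -/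
def edgeFiber (ends : E → Sym2 V) (s : Sym2 V) (a : R) : Set (V ⊕ E → R) :=
  {x | ∀ A, 0 ≤ cut ends x A + edgeCut a s A}

lemma mem_edgeFiber_of_nonpos {ends : E → Sym2 V} {i j : V} {a : R} (ha : a ≤ 0)
    {x : V ⊕ E → R} :
    x ∈ edgeFiber ends s(i, j) a ↔ x + a • vertexVec i + a • vertexVec j ∈ cutCone R ends := by
  refine forall_congr' fun A => ?_
  rw [cut_add_smul_vertexVec, cut_add_smul_vertexVec, edgeCut_mk, min_eq_left (by linarith)]
  split_ifs <;> ring_nf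

lemma mem_edgeFiber_of_nonneg [Finite V] {ends : E → Sym2 V} {i j : V} {a : R} (ha : 0 ≤ a)
    {x : V ⊕ E → R} :
    x ∈ edgeFiber ends s(i, j) a ↔
      ∃ s ∈ Set.Icc (-a) a, x + s • (vertexVec i - vertexVec j) ∈ cutCone R ends := by
  have hmin : min (2 * a) 0 = 0 := min_eq_right (by linarith)
  constructor
  · intro hx
    rcases eq_or_ne i j with rfl | hij
    · refine ⟨0, by simpa using ha, fun A => ?_⟩
      have hA := hx A
      simp only [edgeCut_mk, hmin] at hA
      rw [zero_smul, add_zero]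
      split_ifs at hA <;> simpa using hA
    · obtain ⟨A, B, hiA, hjA, hiB, hjB, hAB, hmem⟩ :=
        exists_forall_add_smul_sub_mem_cutCone_iff ends hij (x := x) fun C hC => by
          have hxC := hx C
          simp only [edgeCut_mk, hmin, hC] at hxC
          split_ifs at hxC <;> simpa using hxC
      have hxA := hx A
      have hxB := hx B
      simp only [edgeCut_mk, hiA, hjA, hiB, hjB, if_true, if_false] at hxA hxB
      exact ⟨max (-a) (-cut ends x A), ⟨le_max_left .., max_le (by linarith) (by linarith)⟩,
        (hmem _).2 ⟨le_max_right .., max_le (by linarith) (by linarith)⟩⟩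
  · rintro ⟨s, ⟨has, hsa⟩, hs⟩ A
    have hA := hs A
    rw [cut_add_smul_sub] at hA
    rw [edgeCut_mk, hmin]
    split_ifs at * <;> linarith

end CutCone

section Polytope

variable {V E : Type*} [DecidableEq V] [DecidableEq E]

lemma single_inl_eq_vertexVec {R : Type*} [CommRing R] (v : V) :
    (Pi.single (Sum.inl v) 1 : V ⊕ E → R) = vertexVec v :=
  (Sum.elim_single_zero v 1).symm

lemma vertexVec_mem_hull_cosmoVertices {ends : E → Sym2 V} {v : V} {f : E} (hv : v ∈ ends f) :
    vertexVec v ∈ PointedCone.hull ℝ (cosmoVertices ends) := by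
  obtain ⟨u, hu⟩ := Sym2.mem_iff_exists.1 hv
  have hvertex : ∀ x, _ → x ∈ PointedCone.hull ℝ (cosmoVertices ends) := fun x hx =>
    PointedCone.subset_hull ⟨f, v, u, hu, hx⟩
  have hsum := add_mem (hvertex _ (Or.inl rfl)) (hvertex _ (Or.inr (Or.inl rfl)))
  convert PointedCone.smul_mem _ (by norm_num : (0 : ℝ) ≤ 1 / 2) hsum using 1
  simp only [single_inl_eq_vertexVec]
  module

variable [Fintype E]

lemma cut_add_single_inr {R : Type*} [CommRing R] [LinearOrder R] (ends : E → Sym2 V)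
    {x : V ⊕ E → R} {f : E} (hx : x (Sum.inr f) = 0) (a : R) (A : Finset V) :
    cut ends (x + Pi.single (Sum.inr f) a) A = cut ends x A + edgeCut a (ends f) A := by
  have hedge : ∀ g,
      edgeCut (x (Sum.inr g) + (Pi.single (Sum.inr f) a : V ⊕ E → R) (Sum.inr g)) (ends g) A =
        edgeCut (x (Sum.inr g)) (ends g) A + if g = f then edgeCut a (ends f) A else 0 := by
    intro g
    rcases eq_or_ne g f with rfl | hgf
    · simp [hx, edgeCut_zero]
    · simp [hgf]
  simp [cut, hedge, Finset.sum_add_distrib, add_assoc]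

lemma add_single_inr_mem_cutCone_iff {R : Type*} [CommRing R] [LinearOrder R]
    [IsStrictOrderedRing R] {ends : E → Sym2 V} {x : V ⊕ E → R} {f : E}
    (hx : x (Sum.inr f) = 0) (a : R) :
    x + Pi.single (Sum.inr f) a ∈ cutCone R ends ↔ x ∈ edgeFiber ends (ends f) a :=
  forall_congr' fun A => by rw [cut_add_single_inr ends hx]

lemma cosmoVertices_subset_cutCone [Finite V] (ends : E → Sym2 V) :
    cosmoVertices ends ⊆ cutCone ℝ ends := by
  rintro x ⟨f, i, j, hf, hx⟩
  simp only [single_inl_eq_vertexVec] at hx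
  have hmem : ∀ (u : V ⊕ E → ℝ) (a : ℝ), u (Sum.inr f) = 0 → u ∈ edgeFiber ends s(i, j) a →
      u + Pi.single (Sum.inr f) a ∈ cutCone ℝ ends := fun u a hu hua =>
    (add_single_inr_mem_cutCone_iff hu a).2 (hf ▸ hua)
  have hinr : ∀ v : V, (vertexVec v : V ⊕ E → ℝ) (Sum.inr f) = 0 := fun v => rfl
  rcases hx with rfl | rfl | rfl
  · rw [sub_eq_add_neg, ← Pi.single_neg]
    refine hmem _ _ (by simp [hinr]) ((mem_edgeFiber_of_nonpos (by norm_num)).2 ?_)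
    convert (cutCone ℝ ends).zero_mem using 1
    module
  · refine hmem _ _ (by simp [hinr])
      ((mem_edgeFiber_of_nonneg zero_le_one).2 ⟨-1, by norm_num, ?_⟩)
    convert (cutCone ℝ ends).zero_mem using 1
    module
  · refine hmem _ _ (by simp [hinr])
      ((mem_edgeFiber_of_nonneg zero_le_one).2 ⟨1, by norm_num, ?_⟩)
    convert (cutCone ℝ ends).zero_mem using 1
    module

lemma exists_mem_hull_cosmoVertices_sub_mem_cutCone [Finite V] {ends : E → Sym2 V}
    {x : V ⊕ E → ℝ} (hx : x ∈ cutCone ℝ ends) (f : E) :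
    ∃ c ∈ PointedCone.hull ℝ (cosmoVertices ends), x - c ∈ cutCone ℝ ends ∧
      ∀ g, (x - c) (Sum.inr g) = if g = f then 0 else x (Sum.inr g) := by
  obtain ⟨i, j, hf⟩ : ∃ i j, ends f = s(i, j) := Sym2.exists.1 ⟨_, rfl⟩
  have hvertex : ∀ y, _ → y ∈ PointedCone.hull ℝ (cosmoVertices ends) := fun y hy =>
    PointedCone.subset_hull ⟨f, i, j, hf, hy⟩
  simp only [single_inl_eq_vertexVec] at hvertex
  set a := x (Sum.inr f)
  have hfiber : x - Pi.single (Sum.inr f) a ∈ edgeFiber ends s(i, j) a := by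
    rw [← hf, ← add_single_inr_mem_cutCone_iff (by simp [a])]
    simpa using hx
  rcases le_total a 0 with ha | ha
  · refine ⟨(-a) • (vertexVec i + vertexVec j - Pi.single (Sum.inr f) 1),
      PointedCone.smul_mem _ (neg_nonneg.2 ha) (hvertex _ (Or.inl rfl)), ?_, fun g => ?_⟩
    · convert (mem_edgeFiber_of_nonpos ha).1 hfiber using 1
      rw [← mul_one a, ← smul_eq_mul, Pi.single_smul]
      module
    · rcases eq_or_ne g f with rfl | hgf <;> simp [vertexVec, a, *]
  · obtain ⟨s, ⟨has, hsa⟩, hs⟩ := (mem_edgeFiber_of_nonneg ha).1 hfiber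
    refine ⟨((a - s) / 2) • (vertexVec i - vertexVec j + Pi.single (Sum.inr f) 1) +
        ((a + s) / 2) • (-vertexVec i + vertexVec j + Pi.single (Sum.inr f) 1),
      add_mem (PointedCone.smul_mem _ (by linarith) (hvertex _ (Or.inr (Or.inl rfl))))
        (PointedCone.smul_mem _ (by linarith) (hvertex _ (Or.inr (Or.inr rfl)))), ?_, fun g => ?_⟩
    · convert hs using 1
      rw [← mul_one a, ← smul_eq_mul, Pi.single_smul]
      module
    · rcases eq_or_ne g f with rfl | hgf <;> simp [vertexVec, a, *]
      ring

lemma mem_hull_cosmoVertices_of_mem_cutCone [Finite V] {ends : E → Sym2 V}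
    (hiso : ∀ v : V, ∃ f : E, v ∈ ends f) (T : Finset E) {x : V ⊕ E → ℝ}
    (hxT : ∀ f ∉ T, x (Sum.inr f) = 0) (hx : x ∈ cutCone ℝ ends) :
    x ∈ PointedCone.hull ℝ (cosmoVertices ends) := by
  induction T using Finset.induction_on generalizing x with
  | empty =>
    cases nonempty_fintype V
    have hedge : ∀ f, x (Sum.inr f) = 0 := fun f => hxT f (Finset.notMem_empty f)
    have hvert : ∀ v, 0 ≤ x (Sum.inl v) := fun v => by
      simpa [cut, hedge, edgeCut_zero] using hx {v}
    have hsum : x = ∑ v, x (Sum.inl v) • vertexVec v := by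
      ext (v | f) <;> simp [vertexVec, hedge, Finset.sum_apply, Pi.single_apply]
    rw [hsum]
    exact sum_mem fun v _ =>
      PointedCone.smul_mem _ (hvert v) (vertexVec_mem_hull_cosmoVertices (hiso v).choose_spec)
  | insert f T _ ih =>
    obtain ⟨c, hc, hxc, hcoord⟩ := exists_mem_hull_cosmoVertices_sub_mem_cutCone hx f
    rw [← sub_add_cancel x c]
    refine add_mem (ih (fun g hg => ?_) hxc) hc
    rw [hcoord]
    split_ifs with hgf
    · rfl
    · exact hxT g (by simp [hgf, hg])

theorem hull_cosmoVertices [Finite V] {ends : E → Sym2 V} (hiso : ∀ v : V, ∃ f : E, v ∈ ends f) :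
    PointedCone.hull ℝ (cosmoVertices ends) = cutCone ℝ ends :=
  le_antisymm (Submodule.span_le.2 (cosmoVertices_subset_cutCone ends)) fun _ hx =>
    mem_hull_cosmoVertices_of_mem_cutCone hiso Finset.univ (by simp) hx

end Polytope

section Degree

variable {R : Type*} [CommRing R]

variable (R) in
/-- The sum of the coordinates. It is the grading of the cone over the cosmological polytope, all
of whose vertices have degree one. -/
def degree (ι : Type*) [Fintype ι] : (ι → R) →ₗ[R] R := ∑ k, LinearMap.proj k

lemma degree_apply {ι : Type*} [Fintype ι] (x : ι → R) : degree R ι x = ∑ k, x k := by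
  simp [degree]

lemma degree_vertexVec {V E : Type*} [DecidableEq V] [Fintype V] [Fintype E] (v : V) :
    degree R (V ⊕ E) (vertexVec v) = 1 := by
  simp [degree_apply, vertexVec]

lemma degree_of_mem_cosmoVertices {V E : Type*} [Fintype V] [Fintype E] [DecidableEq V]
    [DecidableEq E] {ends : E → Sym2 V} {x : V ⊕ E → ℝ} (hx : x ∈ cosmoVertices ends) :
    degree ℝ (V ⊕ E) x = 1 := by
  obtain ⟨f, i, j, -, rfl | rfl | rfl⟩ := hx <;>
    simp [degree_apply, Finset.sum_add_distrib, Finset.sum_sub_distrib]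

theorem mem_smul_cosmoPolytope_iff {V E : Type*} [Fintype V] [Fintype E] [DecidableEq V]
    [DecidableEq E] {ends : E → Sym2 V} (hiso : ∀ v : V, ∃ f : E, v ∈ ends f) {t : ℝ}
    (ht : 0 < t) {x : V ⊕ E → ℝ} :
    x ∈ t • cosmoPolytope ends ↔ x ∈ cutCone ℝ ends ∧ degree ℝ (V ⊕ E) x = t := by
  rw [← hull_cosmoVertices hiso]
  exact mem_smul_convexHull_iff (fun y hy => degree_of_mem_cosmoVertices hy) ht

end Degree

section Slice

variable {V E : Type*} [DecidableEq V] [Fintype E]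

lemma cut_intCast {R : Type*} [CommRing R] [LinearOrder R] [IsStrictOrderedRing R]
    (ends : E → Sym2 V) (x : V ⊕ E → ℤ) (A : Finset V) :
    cut ends (fun k => (x k : R)) A = (cut ends x A : ℤ) := by
  have hedge : ∀ (a : ℤ) (s : Sym2 V), edgeCut (a : R) s A = (edgeCut a s A : ℤ) := by
    intro a s
    induction s with | _ i j
    simp only [edgeCut_mk]
    split_ifs <;> simp
  simp [cut, hedge]

lemma intCast_mem_cutCone_iff {R : Type*} [CommRing R] [LinearOrder R] [IsStrictOrderedRing R]
    {ends : E → Sym2 V} {x : V ⊕ E → ℤ} :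
    (fun k => (x k : R)) ∈ cutCone R ends ↔ x ∈ cutCone ℤ ends :=
  forall_congr' fun A => by rw [cut_intCast, Int.cast_nonneg_iff]

variable [Fintype V]

section Bounds

variable {R : Type*} [CommRing R] [LinearOrder R] [IsStrictOrderedRing R]
  {ends : E → Sym2 V} {x : V ⊕ E → R}

lemma sum_abs_inr_le_degree (hx : x ∈ cutCone R ends) :
    ∑ f, |x (Sum.inr f)| ≤ degree R (V ⊕ E) x := by
  have habs : ∀ a : R, |a| = a - min (2 * a) 0 := by grind
  have huniv := hx Finset.univ
  simp only [cut, edgeCut_univ] at huniv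
  simp only [habs, Finset.sum_sub_distrib, degree_apply, Fintype.sum_sum_type]
  linarith

lemma cut_le_sum_inl_add_degree (hx : x ∈ cutCone R ends) (A : Finset V) :
    cut ends x A ≤ ∑ v ∈ A, x (Sum.inl v) + degree R (V ⊕ E) x :=
  add_le_add_right ((Finset.sum_le_sum fun f _ => edgeCut_le_abs _ (ends f) A).trans
    (sum_abs_inr_le_degree hx)) _

lemma abs_le_three_mul_degree (hx : x ∈ cutCone R ends) (k : V ⊕ E) :
    |x k| ≤ 3 * degree R (V ⊕ E) x := by
  have habs := sum_abs_inr_le_degree hx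
  have hnonneg : 0 ≤ ∑ f, |x (Sum.inr f)| := Finset.sum_nonneg fun _ _ => abs_nonneg _
  rcases k with v | f
  · have hsingle := (hx {v}).trans (cut_le_sum_inl_add_degree hx {v})
    have herase := (hx (Finset.univ.erase v)).trans (cut_le_sum_inl_add_degree hx _)
    have hsplit := Finset.add_sum_erase Finset.univ (fun u => x (Sum.inl u)) (Finset.mem_univ v)
    have hedges := (neg_le_abs _).trans
      (Finset.abs_sum_le_sum_abs (fun f => x (Sum.inr f)) Finset.univ)
    have hdegree : degree R (V ⊕ E) x = ∑ u, x (Sum.inl u) + ∑ f, x (Sum.inr f) := by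
      rw [degree_apply, Fintype.sum_sum_type]
    rw [Finset.sum_singleton] at hsingle
    exact abs_le.2 ⟨by linarith, by linarith⟩
  · have hedge := Finset.single_le_sum (fun g _ => abs_nonneg (x (Sum.inr g))) (Finset.mem_univ f)
    linarith

end Bounds

/-- The lattice points of degree `t` of the cone over the cosmological polytope, that is, the
lattice points of its `t`-th dilate. -/
def slice (ends : E → Sym2 V) (t : ℤ) : Set (V ⊕ E → ℤ) :=
  {x | x ∈ cutCone ℤ ends ∧ degree ℤ (V ⊕ E) x = t}

lemma slice_finite (ends : E → Sym2 V) (t : ℤ) : (slice ends t).Finite := by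
  classical
  refine (Set.finite_Icc (fun _ => -(3 * t)) fun _ => 3 * t).subset ?_
  rintro x ⟨hx, rfl⟩
  exact ⟨fun k => (abs_le.1 (abs_le_three_mul_degree hx k)).1,
    fun k => (abs_le.1 (abs_le_three_mul_degree hx k)).2⟩

lemma slice_zero (ends : E → Sym2 V) : slice ends 0 = {0} := by
  refine Set.Subset.antisymm (fun x ⟨hx, hdeg⟩ => funext fun k => ?_) ?_
  · simpa [hdeg] using abs_le_three_mul_degree hx k
  · rintro _ rfl
    exact ⟨(cutCone ℤ ends).zero_mem, map_zero _⟩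

lemma latticePointCount_cosmoPolytope [DecidableEq E] {ends : E → Sym2 V}
    (hiso : ∀ v : V, ∃ f : E, v ∈ ends f) {t : ℕ} (ht : 0 < t) :
    latticePointCount (cosmoPolytope ends) t = (slice ends t).ncard := by
  have hdegree : ∀ x : V ⊕ E → ℤ,
      degree ℝ (V ⊕ E) (fun k => (x k : ℝ)) = (degree ℤ (V ⊕ E) x : ℤ) := by
    simp [degree_apply]
  refine congrArg Set.ncard (Set.ext fun x => ?_)
  rw [Set.mem_ofPred_eq, mem_smul_cosmoPolytope_iff hiso (Nat.cast_pos.2 ht),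
    intCast_mem_cutCone_iff, hdegree]
  exact and_congr_right' (by norm_cast)

lemma add_smul_sub_mem_slice_iff {ends : E → Sym2 V} {x : V ⊕ E → ℤ} {i j : V} {s t : ℤ} :
    x + s • (vertexVec i - vertexVec j) ∈ slice ends t ↔
      x + s • (vertexVec i - vertexVec j) ∈ cutCone ℤ ends ∧ degree ℤ (V ⊕ E) x = t := by
  simp only [slice, Set.mem_ofPred_eq, map_add, map_smul, map_sub, degree_vertexVec, sub_self,
    smul_zero, add_zero]

end Slice

section Sweep

variable {G : Type*} [AddCommGroup G]

lemma ncard_setOf_add_mem (C : Set G) (c : G) : {y | y + c ∈ C}.ncard = C.ncard :=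
  Set.ncard_preimage_of_injective_subset_range (add_left_injective c)
    fun x _ => ⟨x - c, sub_add_cancel x c⟩

/-- Each unit step of the sweep adds a translate of the points at which `C` is left. -/
lemma ncard_setOf_exists_add_zsmul_mem {C : Set G} (hC : C.Finite) {δ : G}
    (hconv : ∀ (y : G) {r s t : ℤ}, r ≤ s → s ≤ t → y + r • δ ∈ C → y + t • δ ∈ C → y + s • δ ∈ C)
    (m : ℤ) (n : ℕ) :
    {y | ∃ s ∈ Set.Icc m (m + n), y + s • δ ∈ C}.ncard =
      C.ncard + n * {x ∈ C | x + δ ∉ C}.ncard := by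
  induction n generalizing m with
  | zero => simpa using ncard_setOf_add_mem C (m • δ)
  | succ n ih =>
    set U := {y | ∃ s ∈ Set.Icc (m + 1) (m + 1 + n), y + s • δ ∈ C}
    set T := {y | y + m • δ ∈ {x ∈ C | x + δ ∉ C}}
    have htranslate : ∀ s : ℤ, {y | y + s • δ ∈ C}.Finite := fun s =>
      hC.preimage (add_left_injective _).injOn
    have hU : U.Finite := ((Set.finite_Icc (m + 1) (m + 1 + n)).biUnion fun s _ =>
      htranslate s).subset fun y ⟨s, hs, hy⟩ => Set.mem_biUnion hs hy
    have hT : ∀ y, y ∈ T ↔ y + m • δ ∈ C ∧ y + (m + 1) • δ ∉ C := fun y => by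
      simp only [T, Set.mem_ofPred_eq, add_smul, one_smul, add_assoc]
    have hunion : {y | ∃ s ∈ Set.Icc m (m + (n + 1 : ℕ)), y + s • δ ∈ C} = U ∪ T := by
      ext y
      rw [Set.mem_union, hT]
      constructor
      · rintro ⟨s, ⟨hms, hsn⟩, hs⟩
        rcases hms.eq_or_lt with rfl | hms
        · by_cases hnext : y + (m + 1) • δ ∈ C
          · exact Or.inl ⟨m + 1, ⟨le_rfl, by lia⟩, hnext⟩
          · exact Or.inr ⟨hs, hnext⟩
        · exact Or.inl ⟨s, ⟨hms, by lia⟩, hs⟩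
      · rintro (⟨s, ⟨hms, hsn⟩, hs⟩ | ⟨hs, -⟩)
        · exact ⟨s, ⟨by lia, by lia⟩, hs⟩
        · exact ⟨m, ⟨le_rfl, by lia⟩, hs⟩
    have hdisj : Disjoint U T := Set.disjoint_left.2 fun y ⟨s, ⟨hms, _⟩, hs⟩ hy =>
      ((hT y).1 hy).2 (hconv y (by lia) hms ((hT y).1 hy).1 hs)
    rw [hunion, Set.ncard_union_eq hdisj hU ((htranslate m).subset fun y hy => hy.1), ih,
      ncard_setOf_add_mem]
    ring

end Sweep

section AddEdge

variable {V E : Type*}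

/-- The point obtained from `y` by giving the new edge the coordinate `a`. -/
def extend {R : Type*} (a : R) (y : V ⊕ E → R) : V ⊕ Option E → R :=
  Sum.elim (y ∘ Sum.inl) fun o => o.elim a (y ∘ Sum.inr)

lemma extend_injective {R : Type*} (a : R) :
    Function.Injective (extend a : (V ⊕ E → R) → V ⊕ Option E → R) := fun y z h => by
  ext (v | f)
  · exact congrFun h (Sum.inl v)
  · exact congrFun h (Sum.inr (some f))

lemma extend_comp_map_some {R : Type*} (x : V ⊕ Option E → R) :
    extend (x (Sum.inr none)) (x ∘ Sum.map id some) = x := by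
  ext (v | _ | f) <;> rfl

variable [Fintype E]

lemma degree_extend [Fintype V] {R : Type*} [CommRing R] (a : R) (y : V ⊕ E → R) :
    degree R (V ⊕ Option E) (extend a y) = degree R (V ⊕ E) y + a := by
  simp [degree_apply, extend, Fintype.sum_option, add_assoc, add_comm a]

variable [DecidableEq V]

lemma cut_addEdgeEnds_extend {R : Type*} [CommRing R] [LinearOrder R] (ends : E → Sym2 V)
    (i j : V) (a : R) (y : V ⊕ E → R) (A : Finset V) :
    cut (addEdgeEnds ends i j) (extend a y) A = cut ends y A + edgeCut a s(i, j) A := by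
  simp [cut, extend, addEdgeEnds, Fintype.sum_option, add_left_comm, add_comm]

variable [Fintype V]

/-- The points of degree `t` from which a step in the direction `e_i - e_j` leaves the cone. -/
def topSlice (ends : E → Sym2 V) (i j : V) (t : ℤ) : Set (V ⊕ E → ℤ) :=
  {x ∈ slice ends t | x + (vertexVec i - vertexVec j) ∉ slice ends t}

variable (ends : E → Sym2 V) (i j : V)

lemma ncard_slice_addEdgeEnds_inter (t a : ℤ) :
    {x ∈ slice (addEdgeEnds ends i j) t | x (Sum.inr none) = a}.ncard =
      {y ∈ edgeFiber ends s(i, j) a | degree ℤ (V ⊕ E) y = t - a}.ncard := by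
  have hmem : ∀ y : V ⊕ E → ℤ, extend a y ∈ slice (addEdgeEnds ends i j) t ↔
      y ∈ edgeFiber ends s(i, j) a ∧ degree ℤ (V ⊕ E) y = t - a := fun y => by
    simp only [slice, Set.mem_ofPred_eq, mem_cutCone, cut_addEdgeEnds_extend, degree_extend,
      eq_sub_iff_add_eq, edgeFiber]
  refine Eq.trans (congrArg Set.ncard (Set.Subset.antisymm ?_ ?_))
    (Set.ncard_image_of_injective _ (extend_injective a))
  · rintro x ⟨hx, rfl⟩
    rw [← extend_comp_map_some x, hmem] at hx
    exact ⟨_, hx, extend_comp_map_some x⟩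
  · rintro _ ⟨y, hy, rfl⟩
    exact ⟨(hmem y).2 hy, rfl⟩

lemma ncard_slice_addEdgeEnds_inter_neg (t : ℤ) (n : ℕ) :
    {x ∈ slice (addEdgeEnds ends i j) t | x (Sum.inr none) = -n}.ncard =
      (slice ends (t - n)).ncard := by
  rw [ncard_slice_addEdgeEnds_inter,
    ← ncard_setOf_add_mem (slice ends (t - n)) (-(n : ℤ) • vertexVec i + -(n : ℤ) • vertexVec j)]
  refine congrArg Set.ncard (Set.ext fun y => and_congr ?_ ?_)
  · rw [mem_edgeFiber_of_nonpos (by lia), add_assoc]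
  · simp only [map_add, map_smul, degree_vertexVec, smul_eq_mul]
    lia

lemma ncard_slice_addEdgeEnds_inter_nonneg (t : ℤ) (n : ℕ) :
    {x ∈ slice (addEdgeEnds ends i j) t | x (Sum.inr none) = n}.ncard =
      (slice ends (t - n)).ncard + 2 * n * (topSlice ends i j (t - n)).ncard := by
  have hsweep := ncard_setOf_exists_add_zsmul_mem (slice_finite ends (t - n))
    (δ := vertexVec i - vertexVec j) (fun y r s u hrs hsu => by
      simp only [add_smul_sub_mem_slice_iff]
      exact fun hr hu => ⟨add_smul_sub_mem_cutCone_of_le_of_le hrs hsu hr.1 hu.1, hr.2⟩)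
    (-n) (2 * n)
  rw [ncard_slice_addEdgeEnds_inter, topSlice, ← hsweep]
  refine congrArg Set.ncard (Set.ext fun y => ?_)
  simp only [Set.mem_ofPred_eq, mem_edgeFiber_of_nonneg (Int.natCast_nonneg n),
    add_smul_sub_mem_slice_iff, ← and_assoc, exists_and_right]
  rw [show -(n : ℤ) + (2 * n : ℕ) = n by lia]

lemma ncard_slice_addEdgeEnds_inter_natAbs (t : ℤ) (n : ℕ) :
    {x ∈ slice (addEdgeEnds ends i j) t | (x (Sum.inr none)).natAbs = n}.ncard =
      (if n = 0 then 1 else 2) * (slice ends (t - n)).ncard +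
        2 * n * (topSlice ends i j (t - n)).ncard := by
  have hfin : ∀ p : (V ⊕ Option E → ℤ) → Prop,
      {x ∈ slice (addEdgeEnds ends i j) t | p x}.Finite := fun p =>
    (slice_finite _ t).subset fun x hx => hx.1
  have hpos := ncard_slice_addEdgeEnds_inter_nonneg ends i j t n
  have hneg := ncard_slice_addEdgeEnds_inter_neg ends i j t n
  rcases eq_or_ne n 0 with rfl | hn
  · simpa using hpos
  · have hunion : {x ∈ slice (addEdgeEnds ends i j) t | (x (Sum.inr none)).natAbs = n} =
        {x ∈ slice (addEdgeEnds ends i j) t | x (Sum.inr none) = n} ∪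
          {x ∈ slice (addEdgeEnds ends i j) t | x (Sum.inr none) = -n} := by
      ext x
      simp only [Set.mem_union, Set.mem_ofPred_eq, ← and_or_left, Int.natAbs_eq_iff]
    have hdisj : Disjoint {x ∈ slice (addEdgeEnds ends i j) t | x (Sum.inr none) = n}
        {x ∈ slice (addEdgeEnds ends i j) t | x (Sum.inr none) = -n} :=
      Set.disjoint_left.2 fun x hx hx' => by
        have hcoord := hx.2.symm.trans hx'.2
        lia
    rw [hunion, Set.ncard_union_eq hdisj (hfin _) (hfin _), hpos, hneg, if_neg hn]
    ring

lemma ncard_slice_addEdgeEnds (t : ℕ) :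
    (slice (addEdgeEnds ends i j) t).ncard = ∑ p ∈ Finset.HasAntidiagonal.antidiagonal t,
      ((if p.1 = 0 then 1 else 2) * (slice ends p.2).ncard +
        2 * p.1 * (topSlice ends i j p.2).ncard) := by
  classical
  have hfin := slice_finite (addEdgeEnds ends i j) t
  have hmaps : ∀ x ∈ hfin.toFinset,
      (x (Sum.inr none)).natAbs ∈ Finset.range (t + 1) := fun x hx => by
    obtain ⟨hx, hdeg⟩ := hfin.mem_toFinset.1 hx
    have hsum := sum_abs_inr_le_degree hx
    have hcoord := Finset.single_le_sum (fun g _ => abs_nonneg (x (Sum.inr g)))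
      (Finset.mem_univ none)
    rw [Int.abs_eq_natAbs] at hcoord
    rw [Finset.mem_range]
    lia
  rw [Finset.Nat.sum_antidiagonal_eq_sum_range_succ_mk, Set.ncard_eq_toFinset_card _ hfin,
    Finset.card_eq_sum_card_fiberwise hmaps]
  refine Finset.sum_congr rfl fun n hn => ?_
  rw [Nat.cast_sub (Finset.mem_range_succ_iff.1 hn), ← ncard_slice_addEdgeEnds_inter_natAbs,
    ← Set.ncard_coe_finset]
  simp

end AddEdge

section Contraction

section Pushforward

variable {V W E R : Type*} [CommRing R] [Fintype V] [DecidableEq W]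

/-- Pushing forward the vertex coordinates along a map of vertex sets. -/
def pushforward (π : V → W) (x : V ⊕ E → R) : W ⊕ E → R :=
  Sum.elim (fun w => ∑ v with π v = w, x (Sum.inl v)) (x ∘ Sum.inr)

lemma degree_pushforward [Fintype W] [Fintype E] (π : V → W) (x : V ⊕ E → R) :
    degree R (W ⊕ E) (pushforward π x) = degree R (V ⊕ E) x := by
  simp [degree_apply, pushforward, Finset.sum_fiberwise]

lemma cut_pushforward [DecidableEq V] [LinearOrder R] [Fintype E] (ends : E → Sym2 V) (π : V → W)
    (x : V ⊕ E → R) (A : Finset W) :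
    cut (Sym2.map π ∘ ends) (pushforward π x) A = cut ends x {v | π v ∈ A} := by
  have hedge : ∀ (a : R) (s : Sym2 V), edgeCut a (s.map π) A = edgeCut a s {v | π v ∈ A} := by
    intro a s
    induction s with | _ i j
    simp [edgeCut_mk]
  have hvert : ∑ w ∈ A, ∑ v with π v = w, x (Sum.inl v) = ∑ v with π v ∈ A, x (Sum.inl v) := by
    rw [← Finset.sum_fiberwise_of_maps_to (g := π) (t := A) (by simp)]
    refine Finset.sum_congr rfl fun w hw => Finset.sum_congr ?_ fun _ _ => rfl
    ext v
    simp +contextual [hw]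
  simp [cut, pushforward, hedge, hvert]

end Pushforward

variable {V E : Type*} [DecidableEq V]

/-- The contraction map that identifies `j` with `i`. -/
def merge {i j : V} (hij : i ≠ j) (v : V) : {v // v ≠ j} :=
  if h : v = j then ⟨i, hij⟩ else ⟨v, h⟩

lemma coe_merge {i j : V} (hij : i ≠ j) (v : V) : (merge hij v : V) = if v = j then i else v := by
  unfold merge
  split_ifs <;> rfl

variable {i j : V} (hij : i ≠ j)

/-- The endpoint map of the graph obtained by identifying the vertices `i` and `j`. -/
def contractEnds (ends : E → Sym2 V) : E → Sym2 {v // v ≠ j} := Sym2.map (merge hij) ∘ ends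

lemma pushforward_merge_inl {R : Type*} [CommRing R] [Fintype V] (x : V ⊕ E → R)
    (w : {v // v ≠ j}) :
    pushforward (merge hij) x (Sum.inl w) =
      x (Sum.inl w) + if i = w then x (Sum.inl j) else 0 := by
  have hw := w.2
  have hsplit : ({v | merge hij v = w} : Finset V) = {w.1} ∪ if i = w.1 then {j} else ∅ := by
    ext v
    simp only [Finset.mem_filter_univ, Subtype.ext_iff, coe_merge]
    grind
  have hdisj : Disjoint {w.1} (if i = w.1 then {j} else ∅ : Finset V) := by
    split_ifs <;> simp [hw]
  change ∑ v with merge hij v = w, x (Sum.inl v) = _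
  rw [hsplit, Finset.sum_union hdisj]
  split_ifs <;> simp

lemma pushforward_merge_eq_iff {R : Type*} [CommRing R] [Fintype V] {x y : V ⊕ E → R} :
    pushforward (merge hij) x = pushforward (merge hij) y ↔
      ∃ m : R, y = x + m • (vertexVec i - vertexVec j) := by
  constructor
  · intro h
    refine ⟨y (Sum.inl i) - x (Sum.inl i), ?_⟩
    have hinl := fun w => congrFun h (Sum.inl w)
    simp only [pushforward_merge_inl] at hinl
    ext (v | f)
    · have hi := hinl ⟨i, hij⟩
      have hv := fun hvj => hinl ⟨v, hvj⟩
      simp only [vertexVec, Pi.add_apply, Pi.smul_apply, Pi.sub_apply, Sum.elim_inl,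
        Pi.single_apply, smul_eq_mul]
      grind
    · simpa [vertexVec, pushforward] using (congrFun h (Sum.inr f)).symm
  · rintro ⟨m, rfl⟩
    ext (w | f)
    · simp only [pushforward_merge_inl, vertexVec, Pi.add_apply, Pi.smul_apply, Pi.sub_apply,
        Sum.elim_inl, Pi.single_apply, smul_eq_mul]
      grind
    · simp [pushforward, vertexVec]

lemma exists_pushforward_merge_eq {R : Type*} [CommRing R] [Fintype V]
    (z : {v // v ≠ j} ⊕ E → R) : ∃ x : V ⊕ E → R, pushforward (merge hij) x = z := by
  refine ⟨Sum.elim (fun v => if h : v ≠ j then z (Sum.inl ⟨v, h⟩) else 0) (z ∘ Sum.inr), ?_⟩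
  ext (w | f)
  · simp [pushforward_merge_inl, w.2]
  · rfl

variable [Fintype V] [Fintype E] {ends : E → Sym2 V} {t : ℤ}

lemma le_zero_of_mem_topSlice {x : V ⊕ E → ℤ} (hx : x ∈ topSlice ends i j t) {m : ℤ}
    (hm : x + m • (vertexVec i - vertexVec j) ∈ slice ends t) : m ≤ 0 := by
  by_contra! hpos
  obtain ⟨⟨hx, hdeg⟩, hstep⟩ := hx
  rw [← one_smul ℤ (vertexVec i - _), add_smul_sub_mem_slice_iff] at hstep
  exact hstep
    ⟨add_smul_sub_mem_cutCone_of_le_of_le zero_le_one hpos (by simpa using hx) hm.1, hdeg⟩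

lemma bijOn_pushforward_merge (ends : E → Sym2 V) (t : ℤ) :
    Set.BijOn (pushforward (merge hij)) (topSlice ends i j t)
      (slice (contractEnds hij ends) t) := by
  refine ⟨fun x hx => ?_, fun x hx y hy hxy => ?_, fun z ⟨hz, hdeg⟩ => ?_⟩
  · refine ⟨fun A => ?_, (degree_pushforward _ _).trans hx.1.2⟩
    rw [contractEnds, cut_pushforward]
    exact hx.1.1 _
  · obtain ⟨m, hm⟩ := (pushforward_merge_eq_iff hij).1 hxy
    have hle : m ≤ 0 := le_zero_of_mem_topSlice hx (hm ▸ hy.1)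
    have hge : -m ≤ 0 := le_zero_of_mem_topSlice hy (by simpa [hm] using hx.1)
    simpa [show m = 0 by lia] using hm.symm
  · obtain ⟨x, rfl⟩ := exists_pushforward_merge_eq hij z
    rw [degree_pushforward] at hdeg
    obtain ⟨A, B, -, -, -, -, hAB, hmem⟩ :=
      exists_forall_add_smul_sub_mem_cutCone_iff ends hij (x := x) fun C hC => by
        have hzC := hz (C.image (merge hij))
        rw [contractEnds, cut_pushforward] at hzC
        convert hzC
        ext v
        simp only [Finset.mem_filter_univ, Finset.mem_image, Subtype.ext_iff, coe_merge]
        grind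
    refine ⟨x + cut ends x B • (vertexVec i - vertexVec j), ⟨?_, ?_⟩,
      ((pushforward_merge_eq_iff hij).2 ⟨_, rfl⟩).symm⟩
    · exact add_smul_sub_mem_slice_iff.2 ⟨(hmem _).2 ⟨by linarith, le_rfl⟩, hdeg⟩
    · rw [add_assoc, ← add_one_zsmul, add_smul_sub_mem_slice_iff, hmem]
      lia

lemma ncard_topSlice (ends : E → Sym2 V) (t : ℤ) :
    (topSlice ends i j t).ncard = (slice (contractEnds hij ends) t).ncard :=
  (bijOn_pushforward_merge hij ends t).ncard_eq

lemma topSlice_self (ends : E → Sym2 V) (i : V) (t : ℤ) : topSlice ends i i t = ∅ := by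
  simp [topSlice]

end Contraction

section Series

variable {V E : Type*} [Fintype V] [DecidableEq V] [Fintype E]

/-- The Hilbert series of the lattice points of the cone over the cosmological polytope. -/
noncomputable def hilbertSeries (ends : E → Sym2 V) : PowerSeries ℚ :=
  .mk fun t => (slice ends t).ncard

lemma ehrhartSeries_cosmoPolytope [DecidableEq E] {ends : E → Sym2 V}
    (hiso : ∀ v : V, ∃ f : E, v ∈ ends f) :
    ehrhartSeries (cosmoPolytope ends) = hilbertSeries ends := by
  ext t
  rcases t.eq_zero_or_pos with rfl | ht
  · simp [ehrhartSeries, hilbertSeries, slice_zero]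
  · simp [ehrhartSeries, hilbertSeries, ht.ne', latticePointCount_cosmoPolytope hiso ht]

/-- The `h^*`-series of a multigraph, which makes sense also in the presence of isolated
vertices. -/
noncomputable def hStarSeries (ends : E → Sym2 V) : PowerSeries ℚ :=
  hilbertSeries ends * (1 - PowerSeries.X) ^ (Fintype.card V + Fintype.card E)

lemma isHStarPoly_cosmoPolytope_iff [Nonempty V] [DecidableEq E] {ends : E → Sym2 V}
    (hiso : ∀ v : V, ∃ f : E, v ∈ ends f) {h : Polynomial ℚ} :
    IsHStarPoly (cosmoPolytope ends) (Fintype.card V + Fintype.card E - 1) h ↔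
      hStarSeries ends = h := by
  rw [IsHStarPoly, ehrhartSeries_cosmoPolytope hiso, hStarSeries,
    Nat.sub_add_cancel (Nat.le_add_right_of_le Fintype.card_pos)]

lemma constantCoeff_hStarSeries (ends : E → Sym2 V) :
    PowerSeries.constantCoeff (hStarSeries ends) = 1 := by
  have hhilbert : PowerSeries.constantCoeff (hilbertSeries ends) = 1 := by
    rw [← PowerSeries.coeff_zero_eq_constantCoeff_apply, hilbertSeries, PowerSeries.coeff_mk]
    simp [slice_zero]
  simp [hStarSeries, hhilbert]

lemma hilbertSeries_addEdgeEnds (ends : E → Sym2 V) (i j : V) :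
    hilbertSeries (addEdgeEnds ends i j) =
      .mk (fun n => if n = 0 then 1 else 2) * hilbertSeries ends +
        .mk (fun n => 2 * n) * .mk fun t => ((topSlice ends i j t).ncard : ℚ) := by
  ext t
  rw [map_add, PowerSeries.coeff_mul, PowerSeries.coeff_mul, ← Finset.sum_add_distrib]
  simp only [hilbertSeries, PowerSeries.coeff_mk, ncard_slice_addEdgeEnds]
  push_cast
  rfl

lemma mk_ite_mul_one_sub_X {R : Type*} [CommRing R] :
    (.mk (fun n => if n = 0 then 1 else 2) : PowerSeries R) * (1 - PowerSeries.X) =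
      1 + PowerSeries.X := by
  ext n
  rcases n with _ | _ | n <;> norm_num [mul_sub, PowerSeries.coeff_succ_mul_X,
    PowerSeries.coeff_one, PowerSeries.coeff_X]

lemma coeff_succ_two_mul_X_mul {R : Type*} [CommSemiring R] (p : PowerSeries R) (n : ℕ) :
    PowerSeries.coeff (n + 1) (2 * PowerSeries.X * p) = 2 * PowerSeries.coeff n p := by
  rw [mul_assoc, two_mul, map_add, PowerSeries.coeff_succ_X_mul, ← two_mul]

lemma mk_two_mul_mul_one_sub_X_sq {R : Type*} [CommRing R] :
    (.mk (fun n => 2 * n) : PowerSeries R) * (1 - PowerSeries.X) ^ 2 = 2 * PowerSeries.X := by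
  have hmk : (.mk (fun n => 2 * n) : PowerSeries R) * (1 - PowerSeries.X) =
      2 * PowerSeries.X * .mk 1 := by
    ext (_ | n)
    · simp
    · rw [coeff_succ_two_mul_X_mul, mul_sub, mul_one, map_sub, PowerSeries.coeff_succ_mul_X]
      simp [mul_add]
  rw [sq, ← mul_assoc, hmk, mul_assoc, PowerSeries.mk_one_mul_one_sub_eq_one, mul_one]

theorem hStarSeries_addEdgeEnds_self (ends : E → Sym2 V) (i : V) :
    hStarSeries (addEdgeEnds ends i i) = (1 + PowerSeries.X) * hStarSeries ends := by
  have htop : (.mk fun t => ((topSlice ends i i t).ncard : ℚ) : PowerSeries ℚ) = 0 := by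
    ext t
    simp [topSlice_self]
  rw [hStarSeries, hStarSeries, hilbertSeries_addEdgeEnds, htop, ← mk_ite_mul_one_sub_X,
    Fintype.card_option]
  ring

theorem hStarSeries_addEdgeEnds_of_ne (ends : E → Sym2 V) {i j : V} (hij : i ≠ j) :
    hStarSeries (addEdgeEnds ends i j) =
      (1 + PowerSeries.X) * hStarSeries ends +
        2 * PowerSeries.X * hStarSeries (contractEnds hij ends) := by
  have htop : (.mk fun t => ((topSlice ends i j t).ncard : ℚ) : PowerSeries ℚ) =
      hilbertSeries (contractEnds hij ends) := by
    simp only [hilbertSeries, ncard_topSlice hij]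
  have hcard : Fintype.card V = Fintype.card {v // v ≠ j} + 1 := by
    rw [Fintype.card_subtype_compl, Fintype.card_subtype_eq,
      Nat.sub_add_cancel (Fintype.card_pos_iff.2 ⟨i⟩)]
  simp only [hStarSeries, hilbertSeries_addEdgeEnds, htop, ← mk_ite_mul_one_sub_X,
    ← mk_two_mul_mul_one_sub_X_sq, Fintype.card_option, hcard]
  ring

lemma ncard_slice_comp_equiv {F : Type*} [Fintype F] (e : E ≃ F) (ends : F → Sym2 V) (t : ℤ) :
    (slice (ends ∘ e) t).ncard = (slice ends t).ncard := by
  set Φ := (Equiv.sumCongr (Equiv.refl V) e).symm.arrowCongr (Equiv.refl ℤ) with hΦ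
  have hcut : ∀ x A, cut (ends ∘ e) (Φ x) A = cut ends x A := fun x A => by
    simp [cut, hΦ, Equiv.sum_comp e fun f => edgeCut (x (Sum.inr f)) (ends f) A]
  have hdegree : ∀ x, degree ℤ (V ⊕ E) (Φ x) = degree ℤ (V ⊕ F) x := fun x => by
    simp [degree_apply, hΦ, Equiv.sum_comp e fun f => x (Sum.inr f)]
  rw [← Set.ncard_preimage_of_injective_subset_range Φ.injective (by simp)]
  simp [slice, mem_cutCone, hcut, hdegree]

lemma hStarSeries_comp_equiv {F : Type*} [Fintype F] (e : E ≃ F) (ends : F → Sym2 V) :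
    hStarSeries (ends ∘ e) = hStarSeries ends := by
  simp only [hStarSeries, hilbertSeries, ncard_slice_comp_equiv, Fintype.card_congr e]

lemma ncard_slice_of_isEmpty [IsEmpty E] (ends : E → Sym2 V) (t : ℕ) :
    (slice ends t).ncard = (Finset.finsuppAntidiag (Finset.univ : Finset V) t).card := by
  set Φ : (V →₀ ℕ) → V ⊕ E → ℤ := fun g => Sum.elim (fun v => (g v : ℤ)) isEmptyElim with hΦ
  have hinj : Function.Injective Φ := fun g g' h => by
    ext v
    simpa [hΦ] using congrFun h (Sum.inl v)
  rw [← Set.ncard_coe_finset, ← Set.ncard_image_of_injective _ hinj]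
  congr 1
  ext x
  constructor
  · rintro ⟨hx, hdeg⟩
    have hvert : ∀ v, 0 ≤ x (Sum.inl v) := fun v => by simpa [cut] using hx {v}
    have hpre : Φ (Finsupp.equivFunOnFinite.symm fun v => (x (Sum.inl v)).toNat) = x := by
      ext (v | f)
      · simp [hΦ, hvert v]
      · exact isEmptyElim f
    refine ⟨_, ?_, hpre⟩
    have hsum : ∑ v, (x (Sum.inl v)).toNat = t := by
      zify
      simpa [degree_apply, hvert] using hdeg
    simpa using hsum
  · rintro ⟨g, hg, rfl⟩
    have hsum : ∑ v, g v = t := by simpa using hg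
    refine ⟨fun A => ?_, ?_⟩
    · simpa [cut, hΦ] using Finset.sum_nonneg fun v (_ : v ∈ A) => Int.natCast_nonneg (g v)
    · simp [degree_apply, hΦ, ← hsum]

lemma hStarSeries_of_isEmpty [IsEmpty E] (ends : E → Sym2 V) : hStarSeries ends = 1 := by
  have hhilbert : hilbertSeries ends = PowerSeries.mk 1 ^ Fintype.card V := by
    ext t
    rw [← Finset.card_univ, ← Finset.prod_const, PowerSeries.coeff_prod]
    simp [hilbertSeries, ncard_slice_of_isEmpty]
  rw [hStarSeries, hhilbert, Fintype.card_eq_zero (α := E), add_zero, ← mul_pow,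
    PowerSeries.mk_one_mul_one_sub_eq_one, one_pow]

end Series

section Nonneg

universe u v

theorem hStarSeries_mem_rangeS_map_natCast (E : Type v) [Fintype E] :
    ∀ (V : Type u) [Fintype V] [DecidableEq V] (ends : E → Sym2 V),
      hStarSeries ends ∈ (PowerSeries.map (Nat.castRingHom ℚ)).rangeS := by
  have hX : (PowerSeries.X : PowerSeries ℚ) ∈ (PowerSeries.map (Nat.castRingHom ℚ)).rangeS :=
    ⟨PowerSeries.X, PowerSeries.map_X _⟩
  refine Fintype.induction_empty_option (P := fun E _ => ∀ (V : Type u) [Fintype V] [DecidableEq V]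
    (ends : E → Sym2 V), hStarSeries ends ∈ (PowerSeries.map (Nat.castRingHom ℚ)).rangeS)
    ?_ ?_ ?_ E
  · intro F F' _ e ih V _ _ ends
    let := Fintype.ofEquiv F' e.symm
    rw [← hStarSeries_comp_equiv e]
    convert ih V (ends ∘ e)
  · intro V _ _ ends
    rw [hStarSeries_of_isEmpty]
    exact one_mem _
  · intro F _ ih V _ _ ends
    obtain ⟨i, j, hnone⟩ : ∃ i j, ends none = s(i, j) := Sym2.exists.1 ⟨_, rfl⟩
    have hends : ends = addEdgeEnds (ends ∘ some) i j := by
      ext1 (_ | f)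
      · exact hnone
      · rfl
    rw [hends]
    rcases eq_or_ne i j with rfl | hij
    · rw [hStarSeries_addEdgeEnds_self]
      exact mul_mem (add_mem (one_mem _) hX) (ih _ _)
    · rw [hStarSeries_addEdgeEnds_of_ne _ hij]
      exact add_mem (mul_mem (add_mem (one_mem _) hX) (ih _ _))
        (mul_mem (mul_mem (ofNat_mem _ 2) hX) (ih _ _))

lemma coeff_hStarSeries_nonneg {V E : Type*} [Fintype V] [DecidableEq V] [Fintype E]
    (ends : E → Sym2 V) (n : ℕ) : 0 ≤ PowerSeries.coeff n (hStarSeries ends) := by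
  obtain ⟨q, hq⟩ := hStarSeries_mem_rangeS_map_natCast E V ends
  rw [← hq, PowerSeries.coeff_map]
  exact Nat.cast_nonneg _

theorem coeff_one_add_X_mul_hStarSeries_le {V E : Type*} [Fintype V] [DecidableEq V] [Fintype E]
    (ends : E → Sym2 V) (i j : V) (n : ℕ) :
    PowerSeries.coeff n ((1 + PowerSeries.X) * hStarSeries ends) ≤
      PowerSeries.coeff n (hStarSeries (addEdgeEnds ends i j)) := by
  rcases eq_or_ne i j with rfl | hij
  · rw [hStarSeries_addEdgeEnds_self]
  · rw [hStarSeries_addEdgeEnds_of_ne _ hij, map_add, le_add_iff_nonneg_right]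
    cases n with
    | zero => simp
    | succ n =>
      rw [coeff_succ_two_mul_X_mul]
      exact mul_nonneg zero_le_two (coeff_hStarSeries_nonneg _ n)

theorem one_add_X_mul_hStarSeries_eq_iff {V E : Type*} [Fintype V] [DecidableEq V] [Fintype E]
    (ends : E → Sym2 V) (i j : V) :
    (1 + PowerSeries.X) * hStarSeries ends = hStarSeries (addEdgeEnds ends i j) ↔ i = j := by
  refine ⟨fun h => ?_, ?_⟩
  · by_contra hij
    rw [hStarSeries_addEdgeEnds_of_ne _ hij, left_eq_add] at h
    have hcoeff := coeff_succ_two_mul_X_mul (hStarSeries (contractEnds hij ends)) 0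
    rw [h, PowerSeries.coeff_zero_eq_constantCoeff_apply, constantCoeff_hStarSeries] at hcoeff
    norm_num at hcoeff
  · rintro rfl
    exact (hStarSeries_addEdgeEnds_self ends i).symm

end Nonneg

end Cosmo

/-- Let `G = (V,E)` be a graph, `i, j ∈ V`, and let `G + f` be obtained from
`G` by adding a new edge `f` between `i` and `j`.  Then
`(1+z)·h*(C_G; z) ≼ h*(C_{G+f}; z)` coefficientwise, with equality if and only if `f` is a
loop (i.e. `i = j`). -/
theorem hstar_add_edge
    {V E : Type*} [Fintype V] [Fintype E] [DecidableEq V] [DecidableEq E]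
    (ends : E → Sym2 V) (hiso : ∀ v : V, ∃ f : E, v ∈ ends f) (i j : V)
    (h h' : Polynomial ℚ)
    (hh : IsHStarPoly (cosmoPolytope ends) (Fintype.card V + Fintype.card E - 1) h)
    (hh' : IsHStarPoly (cosmoPolytope (addEdgeEnds ends i j))
      (Fintype.card V + Fintype.card (Option E) - 1) h') :
    (∀ n : ℕ, ((1 + Polynomial.X) * h).coeff n ≤ h'.coeff n) ∧
      ((1 + Polynomial.X) * h = h' ↔ i = j) := by
  have : Nonempty V := ⟨i⟩
  have hiso' : ∀ v : V, ∃ f : Option E, v ∈ addEdgeEnds ends i j f := fun v =>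
    (hiso v).imp' some fun _ hf => hf
  rw [Cosmo.isHStarPoly_cosmoPolytope_iff hiso] at hh
  rw [Cosmo.isHStarPoly_cosmoPolytope_iff hiso'] at hh'
  have hcoe : (((1 + Polynomial.X) * h : ℚ[X]) : PowerSeries ℚ) =
      (1 + PowerSeries.X) * Cosmo.hStarSeries ends := by
    rw [hh, Polynomial.coe_mul, Polynomial.coe_add, Polynomial.coe_one, Polynomial.coe_X]
  constructor
  · intro n
    rw [← Polynomial.coeff_coe, ← Polynomial.coeff_coe, hcoe, ← hh']
    exact Cosmo.coeff_one_add_X_mul_hStarSeries_le ends i j n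
  · rw [← Polynomial.coe_inj, hcoe, ← hh']
    exact Cosmo.one_add_X_mul_hStarSeries_eq_iff ends i j
end
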